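/- arXiv:1209.4972 — 3 statements merged into one kernel-verified Lean document; each statement's English description precedes it below -/
import Mathlib

section
/- Let G be a connected unicyclic graph of the form G = C_4 ∪ (P_1 ∪ ⋯ ∪ P_r), where C_4 is a cycle of length 4, each P_i is a path graph with |V(P_i) ∩ V(C_4)| = 1, and the P_i are pairwise vertex-disjoint. If G does not belong to the family 𝒢_4, then J_G is not unmixed. -/
open MvPolynomial

noncomputable section

/-- The binomial edge ideal of a simple graph `G` on vertex type `V`, inside the
polynomial ring `K[x_i, y_i : i ∈ V]`, modelled as `MvPolynomial (V ⊕ V) K`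
with `x_i = X (Sum.inl i)` and `y_i = X (Sum.inr i)`. -/
def binomialEdgeIdeal (K : Type*) [Field K] {V : Type*} (G : SimpleGraph V) :
    Ideal (MvPolynomial (V ⊕ V) K) :=
  Ideal.span { f | ∃ i j : V, G.Adj i j ∧
    f = X (Sum.inl i) * X (Sum.inr j) - X (Sum.inl j) * X (Sum.inr i) }

/-- The minimal number of generators of an ideal. -/
def mu {R : Type*} [CommRing R] (J : Ideal R) : ℕ :=
  sInf {k | ∃ s : Finset R, s.card = k ∧ Ideal.span (s : Set R) = J}

/-- The height of an ideal: the infimum of the heights of the primes containing it. -/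
def htI {R : Type*} [CommRing R] (I : Ideal R) : ℕ∞ :=
  ⨅ (P : PrimeSpectrum R) (_ : I ≤ P.asIdeal), Order.height P

/-- An ideal is unmixed if all of its minimal primes have height equal to its height. -/
def IsUnmixed {R : Type*} [CommRing R] (I : Ideal R) : Prop :=
  ∀ P ∈ I.minimalPrimes, htI P = htI I

/-- The depth of a ring `R` with respect to an ideal `m`: the supremum of the
lengths of regular sequences on `R` consisting of elements of `m`. -/
def ringDepth (R : Type*) [CommRing R] (m : Ideal R) : ℕ∞ :=
  sSup {d : ℕ∞ | ∃ l : List R, (l.length : ℕ∞) = d ∧ (∀ x ∈ l, x ∈ m) ∧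
    RingTheory.Sequence.IsRegular R l}

/-- The graded maximal ideal of the quotient of a polynomial ring by an ideal `J`:
the image of the ideal generated by all the variables. -/
def gradedMaxQuot {K σ : Type*} [Field K] (J : Ideal (MvPolynomial σ K)) :
    Ideal (MvPolynomial σ K ⧸ J) :=
  (Ideal.span (Set.range (X : σ → MvPolynomial σ K))).map (Ideal.Quotient.mk J)

/-- `S/J` is Cohen–Macaulay: its depth with respect to the graded maximal ideal
equals its Krull dimension. -/
def IsCMQuot {K σ : Type*} [Field K] (J : Ideal (MvPolynomial σ K)) : Prop :=
  (ringDepth (MvPolynomial σ K ⧸ J) (gradedMaxQuot J) : WithBot ℕ∞) =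
    ringKrullDim (MvPolynomial σ K ⧸ J)

/-- A graph is a path graph if its vertices can be ordered `v_1, …, v_m` so that
its edges are exactly `{v_i, v_{i+1}}` for `1 ≤ i ≤ m - 1`. -/
def IsPathGraph {V : Type*} (H : SimpleGraph V) : Prop :=
  ∃ (m : ℕ) (e : V ≃ Fin m), ∀ a b : V,
    H.Adj a b ↔ ((e a : ℕ) + 1 = (e b : ℕ) ∨ (e b : ℕ) + 1 = (e a : ℕ))

/-- The vertex set of a connected component, as a set of vertices. -/
def compSupp {V : Type*} (G : SimpleGraph V) (c : G.ConnectedComponent) : Set V :=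
  {v | G.connectedComponentMk v = c}

end

noncomputable section

/-- The adjacency-generating relation of the graph in the family `𝒢₃` with path
lengths `r`, `s`, `t`: three paths `u_1—…—u_r`, `v_1—…—v_s`, `w_1—…—w_t` together
with the triangle `u_1—v_1—w_1—u_1`. -/
def g3Rel (r s t : ℕ) : (Fin r ⊕ (Fin s ⊕ Fin t)) → (Fin r ⊕ (Fin s ⊕ Fin t)) → Prop
  | Sum.inl i, Sum.inl j => (i : ℕ) + 1 = (j : ℕ)
  | Sum.inr (Sum.inl i), Sum.inr (Sum.inl j) => (i : ℕ) + 1 = (j : ℕ)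
  | Sum.inr (Sum.inr i), Sum.inr (Sum.inr j) => (i : ℕ) + 1 = (j : ℕ)
  | Sum.inl i, Sum.inr (Sum.inl j) => (i : ℕ) = 0 ∧ (j : ℕ) = 0
  | Sum.inl i, Sum.inr (Sum.inr j) => (i : ℕ) = 0 ∧ (j : ℕ) = 0
  | Sum.inr (Sum.inl i), Sum.inr (Sum.inr j) => (i : ℕ) = 0 ∧ (j : ℕ) = 0
  | _, _ => False

/-- The member of the family `𝒢₃` with path lengths `r`, `s`, `t`. -/
def graphG3 (r s t : ℕ) : SimpleGraph (Fin r ⊕ (Fin s ⊕ Fin t)) :=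
  SimpleGraph.fromRel (g3Rel r s t)

/-- The adjacency-generating relation of the graph in the family `𝒢₄` with path
lengths `r`, `s`: two paths `u_1—…—u_r` and `v_1—…—v_s` together with the
edges `u_1—v_1` and `u_2—v_2`. -/
def g4Rel (r s : ℕ) : (Fin r ⊕ Fin s) → (Fin r ⊕ Fin s) → Prop
  | Sum.inl i, Sum.inl j => (i : ℕ) + 1 = (j : ℕ)
  | Sum.inr i, Sum.inr j => (i : ℕ) + 1 = (j : ℕ)
  | Sum.inl i, Sum.inr j => ((i : ℕ) = 0 ∧ (j : ℕ) = 0) ∨ ((i : ℕ) = 1 ∧ (j : ℕ) = 1)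
  | _, _ => False

/-- The member of the family `𝒢₄` with path lengths `r`, `s`. -/
def graphG4 (r s : ℕ) : SimpleGraph (Fin r ⊕ Fin s) :=
  SimpleGraph.fromRel (g4Rel r s)

/-- A graph is a cycle graph of length `l` if its vertices can be arranged in a
cyclic order `v_1, …, v_l` so that its edges are exactly the consecutive ones
(indices mod `l`). -/
def IsCycleGraphOfLength {V : Type*} (H : SimpleGraph V) (l : ℕ) : Prop :=
  ∃ e : V ≃ Fin l, ∀ a b : V,
    H.Adj a b ↔ (((e a : ℕ) + 1) % l = (e b : ℕ) ∨ ((e b : ℕ) + 1) % l = (e a : ℕ))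

/-!
For a set `T` of vertices and a colouring of the others which is constant along the edges of
`G - T`, the variables at `T` and the `2`-minors inside the colour classes define a prime ideal
containing `J_G`, whose height is `|V| + |T| - c` if there are `c` colours. For `T = ∅` and `G`
connected it is a minimal prime of height `|V| - 1`. Hence, if `J_G` is unmixed, removing `T` leaves
at most `|T| + 1` components, and exactly `|T| + 1` if every vertex of `T` joins two of them.

Cutting a whiskered `4`-cycle at two opposite vertices shows that exactly one of the two carries
a whisker, so exactly two adjacent cycle vertices do; cutting it at one vertex shows that the
whisker is attached at one of its ends. Each of the two whiskers then extends along the cycle by a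
bare vertex, and this is a member of `𝒢₄`.
-/

section HeightOfIdeal

variable {R : Type*} [CommRing R]

lemma htI_eq_height (P : Ideal R) [hP : P.IsPrime] : htI P = P.height := by
  rw [PrimeSpectrum.height_eq_orderHeight (⟨P, hP⟩ : PrimeSpectrum R)]
  exact le_antisymm (iInf₂_le (⟨P, hP⟩ : PrimeSpectrum R) le_rfl)
    (le_iInf₂ fun Q hQ => Order.height_mono hQ)

lemma htI_mono {I J : Ideal R} (h : I ≤ J) : htI I ≤ htI J :=
  le_iInf₂ fun Q hQ => iInf₂_le Q (h.trans hQ)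

lemma IsUnmixed.height_le_height {I P Q : Ideal R} (hI : IsUnmixed I) (hP : P ∈ I.minimalPrimes)
    [Q.IsPrime] (hQ : I ≤ Q) : P.height ≤ Q.height := by
  have : P.IsPrime := hP.1.1
  calc P.height = htI I := by rw [← htI_eq_height, hI P hP]
    _ ≤ htI Q := htI_mono hQ
    _ = Q.height := htI_eq_height Q

end HeightOfIdeal

section Representative

variable {V κ : Type*} {T : Set V} {f : V → κ} {i j : V}

/-- A chosen vertex outside `T` of the same colour as `i`, depending only on the colour of `i`.
The value is arbitrary if `T` contains all vertices of that colour. -/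
def representative (T : Set V) (f : V → κ) (i : V) : V :=
  haveI : Nonempty V := ⟨i⟩
  Function.invFunOn f Tᶜ (f i)

lemma representative_notMem (hi : i ∉ T) : representative T f i ∉ T :=
  haveI : Nonempty V := ⟨i⟩
  Function.invFunOn_apply_mem (s := Tᶜ) (f := f) hi

lemma apply_representative (hi : i ∉ T) : f (representative T f i) = f i :=
  haveI : Nonempty V := ⟨i⟩
  Function.invFunOn_apply_eq (s := Tᶜ) (f := f) hi

lemma representative_congr (h : f i = f j) : representative T f i = representative T f j := by
  simp only [representative, h]

lemma representative_eq_representative_iff (hi : i ∉ T) (hj : j ∉ T) :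
    representative T f i = representative T f j ↔ f i = f j :=
  ⟨fun h => by rw [← apply_representative (f := f) hi, h, apply_representative (f := f) hj],
    representative_congr⟩

lemma representative_representative (hi : i ∉ T) :
    representative T f (representative T f i) = representative T f i :=
  representative_congr (apply_representative hi)

lemma mem_image_representative_iff :
    i ∈ representative T f '' Tᶜ ↔ i ∉ T ∧ representative T f i = i := by
  constructor
  · rintro ⟨j, hj, rfl⟩
    exact ⟨representative_notMem hj, representative_representative hj⟩
  · exact fun ⟨hi, h⟩ => ⟨i, hi, h⟩

lemma ncard_image_representative : (representative T f '' Tᶜ).ncard = (f '' Tᶜ).ncard := by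
  have himage : f '' (representative T f '' Tᶜ) = f '' Tᶜ := by
    rw [Set.image_image]
    exact Set.image_congr fun i hi => apply_representative hi
  have hinj : Set.InjOn f (representative T f '' Tᶜ) := by
    rintro _ ⟨i, hi, rfl⟩ _ ⟨j, hj, rfl⟩ h
    rw [apply_representative (f := f) hi, apply_representative (f := f) hj] at h
    exact representative_congr h
  rw [← himage, hinj.ncard_image]

end Representative

section CutIdeal

variable {K : Type*} [Field K] {V κ : Type*} {T : Set V} {f : V → κ} {i j : V}

/-- The binomial `f_{ij} = x_i y_j - x_j y_i`. -/
def edgeBinomial (K : Type*) [Field K] (i j : V) : MvPolynomial (V ⊕ V) K :=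
  X (Sum.inl i) * X (Sum.inr j) - X (Sum.inl j) * X (Sum.inr i)

open Classical in
/-- The substitution of the pair `(x_i, y_i)` by `(θ x_i, θ y_i)` for `i ∈ T`, and by
`(θ x_i, θ x_i * θ y_i)` for `i ∉ T`: off `T`, the variable `y_i` plays the role of the slope
`y_i / x_i`. -/
def slopeHom (T : Set V) (θ : V ⊕ V → MvPolynomial (V ⊕ V) K) :
    MvPolynomial (V ⊕ V) K →ₐ[K] MvPolynomial (V ⊕ V) K :=
  aeval (Sum.elim (fun i => θ (.inl i))
    fun i => if i ∈ T then θ (.inr i) else θ (.inl i) * θ (.inr i))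

@[simp] lemma slopeHom_X_inl (θ : V ⊕ V → MvPolynomial (V ⊕ V) K) :
    slopeHom T θ (X (.inl i)) = θ (.inl i) := by
  simp [slopeHom]

lemma slopeHom_X_inr_of_mem (θ : V ⊕ V → MvPolynomial (V ⊕ V) K) (hi : i ∈ T) :
    slopeHom T θ (X (.inr i)) = θ (.inr i) := by
  simp [slopeHom, hi]

lemma slopeHom_X_inr_of_notMem (θ : V ⊕ V → MvPolynomial (V ⊕ V) K) (hi : i ∉ T) :
    slopeHom T θ (X (.inr i)) = θ (.inl i) * θ (.inr i) := by
  simp [slopeHom, hi]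

lemma slopeHom_edgeBinomial (θ : V ⊕ V → MvPolynomial (V ⊕ V) K) (hi : i ∉ T) (hj : j ∉ T) :
    slopeHom T θ (edgeBinomial K i j) =
      θ (.inl i) * θ (.inl j) * (θ (.inr j) - θ (.inr i)) := by
  simp only [edgeBinomial, map_sub, map_mul, slopeHom_X_inl, slopeHom_X_inr_of_notMem _ hi,
    slopeHom_X_inr_of_notMem _ hj]
  ring

lemma aeval_slopeHom (τ θ : V ⊕ V → MvPolynomial (V ⊕ V) K) (p : MvPolynomial (V ⊕ V) K) :
    aeval τ (slopeHom T θ p) = slopeHom T (fun e => aeval τ (θ e)) p := by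
  classical
  suffices h : (aeval τ).comp (slopeHom T θ) = slopeHom T fun e => aeval τ (θ e) from
    DFunLike.congr_fun h p
  apply MvPolynomial.algHom_ext
  rintro (i | i)
  · simp
  · by_cases hi : i ∈ T
    · simp [slopeHom_X_inr_of_mem _ hi]
    · simp [slopeHom_X_inr_of_notMem _ hi]

open Classical in
/-- The values of the scales and slopes that cut out `cutIdeal K T f`: both coordinates vanish at
the vertices of `T`, and off `T` each vertex has the slope of the representative of its colour. -/
def cutSubst (K : Type*) [Field K] (T : Set V) (f : V → κ) : V ⊕ V → MvPolynomial (V ⊕ V) K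
  | .inl i => if i ∈ T then 0 else X (.inl i)
  | .inr i => if i ∈ T then 0 else X (.inr (representative T f i))

/-- The prime ideal attached to a set `T` of removed vertices and a colouring `f` of the others. It
contains `x_i` and `y_i` for `i ∈ T` and the `2`-minors `x_i y_j - x_j y_i` within each colour
class; if the colours are the components of `G - T`, this is the prime usually called `P_T(G)`. -/
def cutIdeal (K : Type*) [Field K] (T : Set V) (f : V → κ) : Ideal (MvPolynomial (V ⊕ V) K) :=
  RingHom.ker (slopeHom T (cutSubst K T f))

instance : (cutIdeal K T f).IsPrime := RingHom.ker_isPrime _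

lemma mem_cutIdeal {p : MvPolynomial (V ⊕ V) K} :
    p ∈ cutIdeal K T f ↔ slopeHom T (cutSubst K T f) p = 0 := Iff.rfl

lemma X_inl_mem_cutIdeal_iff : (X (.inl i) : MvPolynomial (V ⊕ V) K) ∈ cutIdeal K T f ↔ i ∈ T := by
  by_cases hi : i ∈ T <;> simp [mem_cutIdeal, cutSubst, hi]

lemma X_inr_mem_cutIdeal (hi : i ∈ T) :
    (X (.inr i) : MvPolynomial (V ⊕ V) K) ∈ cutIdeal K T f := by
  simp [mem_cutIdeal, slopeHom_X_inr_of_mem _ hi, cutSubst, hi]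

lemma edgeBinomial_mem_cutIdeal_iff :
    edgeBinomial K i j ∈ cutIdeal K T f ↔ i ∈ T ∨ j ∈ T ∨ f i = f j := by
  by_cases hi : i ∈ T
  · simpa [hi, edgeBinomial] using Ideal.sub_mem _
      (Ideal.mul_mem_right _ _ (X_inl_mem_cutIdeal_iff.2 hi))
      (Ideal.mul_mem_left _ _ (X_inr_mem_cutIdeal hi))
  by_cases hj : j ∈ T
  · simpa [hj, edgeBinomial] using Ideal.sub_mem _
      (Ideal.mul_mem_left _ _ (X_inr_mem_cutIdeal hj))
      (Ideal.mul_mem_right _ _ (X_inl_mem_cutIdeal_iff.2 hj))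
  rw [mem_cutIdeal, slopeHom_edgeBinomial _ hi hj]
  simp [cutSubst, hi, hj, sub_eq_zero, X_inj, representative_eq_representative_iff hj hi,
    @eq_comm _ (f j)]

lemma cutIdeal_le_of_generators_mem {Q : Ideal (MvPolynomial (V ⊕ V) K)} [Q.IsPrime]
    (hx : ∀ i ∈ T, X (.inl i) ∈ Q) (hy : ∀ i ∈ T, X (.inr i) ∈ Q)
    (hxy : ∀ i ∉ T, edgeBinomial K i (representative T f i) ∈ Q)
    (hrep : ∀ i ∉ T, X (.inl (representative T f i)) ∉ Q) : cutIdeal K T f ≤ Q := by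
  let F := FractionRing (MvPolynomial (V ⊕ V) K ⧸ Q)
  let toF : MvPolynomial (V ⊕ V) K →ₐ[K] F := Algebra.algHom K _ F
  have toF_eq_zero : ∀ p, toF p = 0 ↔ p ∈ Q := fun p => by
    have : toF p = algebraMap (MvPolynomial (V ⊕ V) K ⧸ Q) F (Ideal.Quotient.mk Q p) := rfl
    rw [this, FaithfulSMul.algebraMap_eq_zero_iff, Ideal.Quotient.eq_zero_iff_mem]
  let evalSlopes : MvPolynomial (V ⊕ V) K →ₐ[K] F := aeval
    (Sum.elim (fun i => toF (X (.inl i))) fun j => toF (X (.inr j)) / toF (X (.inl j)))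
  have hfactor : evalSlopes.comp (slopeHom T (cutSubst K T f)) = toF := by
    apply MvPolynomial.algHom_ext
    rintro (i | i) <;> by_cases hi : i ∈ T
    · simp [cutSubst, hi, (toF_eq_zero _).2 (hx i hi)]
    · simp [cutSubst, hi, evalSlopes]
    · simp [slopeHom_X_inr_of_mem, cutSubst, hi, (toF_eq_zero _).2 (hy i hi)]
    · have hne : toF (X (.inl (representative T f i))) ≠ 0 := mt (toF_eq_zero _).1 (hrep i hi)
      have hminor := (toF_eq_zero _).2 (hxy i hi)
      simp only [edgeBinomial, map_sub, map_mul] at hminor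
      simp only [AlgHom.comp_apply, slopeHom_X_inr_of_notMem _ hi, cutSubst, hi, if_false, map_mul,
        evalSlopes, aeval_X, Sum.elim_inl, Sum.elim_inr]
      rw [← mul_div_assoc, div_eq_iff hne]
      linear_combination hminor
  intro p hp
  rw [← toF_eq_zero, ← hfactor, AlgHom.comp_apply, mem_cutIdeal.1 hp, map_zero]

/-- The variables `x_i`, `y_i` for `i ∈ T`, and the variables `y_i` for which `i` is not the
representative of its colour: modulo `cutIdeal K T f` their scales and slopes are determined by the
remaining ones. -/
def cutVars (T : Set V) (f : V → κ) : Set (V ⊕ V) :=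
  Sum.inl '' T ∪ Sum.inr '' (representative T f '' Tᶜ)ᶜ

lemma inl_mem_cutVars_iff : Sum.inl i ∈ cutVars T f ↔ i ∈ T := by
  simp [cutVars]

lemma inr_mem_cutVars_iff :
    Sum.inr i ∈ cutVars T f ↔ i ∈ T ∨ representative T f i ≠ i := by
  have h : Sum.inr i ∈ cutVars T f ↔ i ∉ representative T f '' Tᶜ := by
    simp [cutVars]
  rw [h, mem_image_representative_iff]
  tauto

lemma ncard_cutVars_add_ncard_image [Finite V] :
    (cutVars T f).ncard + (f '' Tᶜ).ncard = Nat.card V + T.ncard := by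
  rw [cutVars, Set.ncard_union_eq Set.disjoint_image_inl_image_inr,
    Set.ncard_image_of_injective _ Sum.inl_injective,
    Set.ncard_image_of_injective _ Sum.inr_injective, ← ncard_image_representative,
    ← Set.ncard_add_ncard_compl (representative T f '' Tᶜ)]
  ring

open Classical in
/-- The element of `cutIdeal K T f` by which a variable of `cutVars T f` is determined. -/
def cutGenerator (K : Type*) [Field K] (T : Set V) (f : V → κ) : V ⊕ V → MvPolynomial (V ⊕ V) K
  | .inl i => X (.inl i)
  | .inr i => if i ∈ T then X (.inr i) else edgeBinomial K i (representative T f i)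

lemma cutIdeal_mem_minimalPrimes_span :
    cutIdeal K T f ∈ (Ideal.span (cutGenerator K T f '' cutVars T f)).minimalPrimes := by
  refine ⟨⟨inferInstance, Ideal.span_le.2 ?_⟩, ?_⟩
  · rintro _ ⟨i | i, hi, rfl⟩
    · exact X_inl_mem_cutIdeal_iff.2 (inl_mem_cutVars_iff.1 hi)
    · by_cases hiT : i ∈ T
      · simpa [cutGenerator, hiT] using X_inr_mem_cutIdeal hiT
      · simpa [cutGenerator, hiT, edgeBinomial_mem_cutIdeal_iff]
          using Or.inr (apply_representative hiT).symm
  · rintro Q ⟨hQ, hgen⟩ hle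
    have hmem : ∀ e ∈ cutVars T f, cutGenerator K T f e ∈ Q := fun e he =>
      hgen (Ideal.subset_span ⟨e, he, rfl⟩)
    refine cutIdeal_le_of_generators_mem (fun i hi => hmem _ (inl_mem_cutVars_iff.2 hi))
      (fun i hi => ?_) (fun i hi => ?_) fun i hi h =>
        representative_notMem hi (X_inl_mem_cutIdeal_iff.1 (hle h))
    · simpa [cutGenerator, hi] using hmem _ (inr_mem_cutVars_iff.2 (.inl hi))
    · by_cases h : representative T f i = i
      · simp [h, edgeBinomial]
      · simpa [cutGenerator, hi] using hmem _ (inr_mem_cutVars_iff.2 (.inr h))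

open Classical in
/-- The substitution `cutSubst K T f` carried out only for the variables in `E`. -/
def partialCutSubst (K : Type*) [Field K] (T : Set V) (f : V → κ) (E : Set (V ⊕ V)) :
    V ⊕ V → MvPolynomial (V ⊕ V) K :=
  E.piecewise (cutSubst K T f) X

lemma aeval_partialCutSubst_cutSubst (E : Set (V ⊕ V)) (e : V ⊕ V) :
    aeval (partialCutSubst K T f E) (cutSubst K T f e) = cutSubst K T f e := by
  classical
  have hfix : ∀ e, cutSubst K T f e = X e → partialCutSubst K T f E e = X e := fun e he => by
    by_cases h : e ∈ E <;> simp [partialCutSubst, h, he]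
  rcases e with i | i <;> by_cases hi : i ∈ T
  · simp [cutSubst, hi]
  · simpa [cutSubst, hi] using hfix (.inl i) (by simp [cutSubst, hi])
  · simp [cutSubst, hi]
  · simpa [cutSubst, hi] using hfix (.inr (representative T f i))
      (by simp [cutSubst, representative_notMem hi, representative_representative hi])

lemma ker_slopeHom_partialCutSubst_mono {E E' : Set (V ⊕ V)} (h : E ⊆ E') :
    RingHom.ker (slopeHom T (partialCutSubst K T f E)) ≤
      RingHom.ker (slopeHom T (partialCutSubst K T f E')) := by
  intro p hp
  have hsubst : (fun e => aeval (partialCutSubst K T f E') (partialCutSubst K T f E e)) =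
      partialCutSubst K T f E' := by
    ext1 e
    by_cases he : e ∈ E
    · have heq : ∀ D, e ∈ D → partialCutSubst K T f D e = cutSubst K T f e := fun D hD => by
        simp [partialCutSubst, hD]
      rw [heq E he, heq E' (h he), aeval_partialCutSubst_cutSubst]
    · have : partialCutSubst K T f E e = X e := by simp [partialCutSubst, he]
      rw [this, aeval_X]
  rw [RingHom.mem_ker] at hp ⊢
  rw [← hsubst, ← aeval_slopeHom, hp, map_zero]

lemma slopeHom_partialCutSubst_cutGenerator_eq_zero_iff {E : Set (V ⊕ V)} {e : V ⊕ V}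
    (he : e ∈ cutVars T f) :
    slopeHom T (partialCutSubst K T f E) (cutGenerator K T f e) = 0 ↔ e ∈ E := by
  classical
  rcases e with i | i
  · have hi : i ∈ T := inl_mem_cutVars_iff.1 he
    simp [cutGenerator, partialCutSubst, Set.piecewise, cutSubst, hi]
  by_cases hi : i ∈ T
  · simp [cutGenerator, slopeHom_X_inr_of_mem, partialCutSubst, Set.piecewise, cutSubst, hi]
  have hne : representative T f i ≠ i := (inr_mem_cutVars_iff.1 he).resolve_left hi
  have hfix : ∀ e, cutSubst K T f e = X e → partialCutSubst K T f E e = X e := fun e he => by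
    by_cases h : e ∈ E <;> simp [partialCutSubst, h, he]
  have hrep := representative_notMem (f := f) hi
  rw [cutGenerator, if_neg hi, slopeHom_edgeBinomial _ hi hrep,
    hfix (.inl i) (by simp [cutSubst, hi]), hfix (.inl _) (by simp [cutSubst, hrep]),
    hfix (.inr (representative T f i)) (by simp [cutSubst, hrep, representative_representative hi])]
  by_cases h : Sum.inr i ∈ E <;>
    simp [partialCutSubst, h, cutSubst, hi, sub_eq_zero, X_inj, hne]

lemma ncard_le_height_ker_partialCutSubst [Finite V] {E : Set (V ⊕ V)} (hE : E ⊆ cutVars T f) :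
    (E.ncard : ℕ∞) ≤ (RingHom.ker (slopeHom T (partialCutSubst K T f E))).height := by
  induction E, E.toFinite using Set.Finite.induction_on with
  | empty => simp
  | @insert e E he _ ih =>
    rw [Set.insert_subset_iff] at hE
    have hlt : RingHom.ker (slopeHom T (partialCutSubst K T f E)) <
        RingHom.ker (slopeHom T (partialCutSubst K T f (insert e E))) := by
      refine lt_of_le_of_ne (ker_slopeHom_partialCutSubst_mono (Set.subset_insert e E))
        fun h => he ?_
      rw [← slopeHom_partialCutSubst_cutGenerator_eq_zero_iff (K := K) hE.1, ← RingHom.mem_ker, h,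
        RingHom.mem_ker, slopeHom_partialCutSubst_cutGenerator_eq_zero_iff hE.1]
      exact Set.mem_insert e E
    have hprime : ∀ D, (RingHom.ker (slopeHom T (partialCutSubst K T f D))).IsPrime :=
      fun D => RingHom.ker_isPrime _
    rw [Set.ncard_insert_of_notMem he, Nat.cast_add, Nat.cast_one]
    exact (add_le_add_left (ih hE.2) 1).trans (Ideal.height_add_one_le_of_lt_of_isPrime hlt)

lemma partialCutSubst_cutVars : partialCutSubst K T f (cutVars T f) = cutSubst K T f := by
  ext1 e
  by_cases he : e ∈ cutVars T f
  · simp [partialCutSubst, he]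
  rcases e with i | i
  · simp_all [partialCutSubst, cutSubst, inl_mem_cutVars_iff]
  · simp_all [partialCutSubst, cutSubst, inr_mem_cutVars_iff]

lemma height_cutIdeal [Finite V] : (cutIdeal K T f).height = (cutVars T f).ncard := by
  apply le_antisymm
  · refine (Ideal.height_le_card_of_mem_minimalPrimes_span
      ((cutVars T f).toFinite.image _) cutIdeal_mem_minimalPrimes_span).trans ?_
    exact_mod_cast Set.ncard_image_le
  · have := ncard_le_height_ker_partialCutSubst (K := K) (subset_refl (cutVars T f))
    rwa [partialCutSubst_cutVars] at this

end CutIdeal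

section BinomialEdgeIdeal

variable {K : Type*} [Field K] {V κ : Type*} {G : SimpleGraph V} {T : Set V} {f : V → κ}

lemma binomialEdgeIdeal_le_cutIdeal (hf : ∀ i j, G.Adj i j → i ∉ T → j ∉ T → f i = f j) :
    binomialEdgeIdeal K G ≤ cutIdeal K T f := by
  rw [binomialEdgeIdeal, Ideal.span_le]
  rintro _ ⟨i, j, hij, rfl⟩
  refine edgeBinomial_mem_cutIdeal_iff.2 ?_
  have := hf i j hij
  tauto

lemma X_inl_mul_edgeBinomial (i j k : V) :
    X (.inl k) * edgeBinomial K i j =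
      X (.inl i) * edgeBinomial K k j + X (.inl j) * edgeBinomial K i k := by
  simp only [edgeBinomial]
  ring

lemma X_inr_mul_edgeBinomial (i j k : V) :
    X (.inr k) * edgeBinomial K i j =
      X (.inr i) * edgeBinomial K k j + X (.inr j) * edgeBinomial K i k := by
  simp only [edgeBinomial]
  ring

section Prime

variable {Q : Ideal (MvPolynomial (V ⊕ V) K)} {i j a b : V}

lemma edgeBinomial_mem_of_adj (hQ : binomialEdgeIdeal K G ≤ Q) (hij : G.Adj i j) :
    edgeBinomial K i j ∈ Q :=
  hQ (Ideal.subset_span ⟨i, j, hij, rfl⟩)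

variable [Q.IsPrime]

lemma edgeBinomial_mem_of_walk (hQ : binomialEdgeIdeal K G ≤ Q) (p : G.Walk i j)
    (hp : ∀ v ∈ p.support, X (.inl v) ∉ Q) : edgeBinomial K i j ∈ Q := by
  induction p with
  | nil => simp [edgeBinomial]
  | @cons i k j hik p ih =>
    have hkj := ih fun v hv => hp v (by simp [hv])
    have hk : X (.inl k) ∉ Q := hp k (by simp)
    refine (Ideal.IsPrime.mem_or_mem ‹_› ?_).resolve_left hk
    rw [X_inl_mul_edgeBinomial]
    exact Q.add_mem (Q.mul_mem_left _ hkj) (Q.mul_mem_left _ (edgeBinomial_mem_of_adj hQ hik))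

lemma X_mem_of_adj_of_edgeBinomial_notMem (hQ : binomialEdgeIdeal K G ≤ Q) (hai : G.Adj a i)
    (hbi : G.Adj b i) (hab : edgeBinomial K a b ∉ Q) : X (.inl i) ∈ Q ∧ X (.inr i) ∈ Q := by
  have hai := edgeBinomial_mem_of_adj hQ hai
  have hib := edgeBinomial_mem_of_adj hQ hbi.symm
  constructor <;> refine (Ideal.IsPrime.mem_or_mem ‹_› ?_).resolve_right hab
  · rw [X_inl_mul_edgeBinomial]
    exact Q.add_mem (Q.mul_mem_left _ hib) (Q.mul_mem_left _ hai)
  · rw [X_inr_mul_edgeBinomial]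
    exact Q.add_mem (Q.mul_mem_left _ hib) (Q.mul_mem_left _ hai)

end Prime

lemma cutIdeal_mem_minimalPrimes (hf : ∀ i j, G.Adj i j → i ∉ T → j ∉ T → f i = f j)
    (hconn : ∀ i j, i ∉ T → j ∉ T → f i = f j → ∃ p : G.Walk i j, ∀ v ∈ p.support, v ∉ T)
    (hcut : ∀ i ∈ T, ∃ a b, a ∉ T ∧ b ∉ T ∧ G.Adj a i ∧ G.Adj b i ∧ f a ≠ f b) :
    cutIdeal K T f ∈ (binomialEdgeIdeal K G).minimalPrimes := by
  refine ⟨⟨inferInstance, binomialEdgeIdeal_le_cutIdeal hf⟩, ?_⟩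
  rintro Q ⟨hQ, hGQ⟩ hle
  have hX : ∀ v ∉ T, X (.inl v) ∉ Q := fun v hv h => hv (X_inl_mem_cutIdeal_iff.1 (hle h))
  have hT : ∀ i ∈ T, X (.inl i) ∈ Q ∧ X (.inr i) ∈ Q := by
    intro i hi
    obtain ⟨a, b, ha, hb, hai, hbi, hab⟩ := hcut i hi
    refine X_mem_of_adj_of_edgeBinomial_notMem hGQ hai hbi fun h => ?_
    simpa [ha, hb, hab] using edgeBinomial_mem_cutIdeal_iff.1 (hle h)
  have hclass : ∀ i ∉ T, edgeBinomial K i (representative T f i) ∈ Q := by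
    intro i hi
    obtain ⟨p, hp⟩ := hconn i _ hi (representative_notMem hi) (apply_representative hi).symm
    exact edgeBinomial_mem_of_walk hGQ p fun v hv => hX v (hp v hv)
  exact cutIdeal_le_of_generators_mem (fun i hi => (hT i hi).1) (fun i hi => (hT i hi).2) hclass
    fun i hi => hX _ (representative_notMem hi)

section Unmixed

variable [Finite V]

lemma IsUnmixed.ncard_image_compl_add_le (hI : IsUnmixed (binomialEdgeIdeal K G)) {κ' : Type*}
    {T' : Set V} {f' : V → κ'} (hmin : cutIdeal K T f ∈ (binomialEdgeIdeal K G).minimalPrimes)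
    (hf' : ∀ i j, G.Adj i j → i ∉ T' → j ∉ T' → f' i = f' j) :
    (f' '' T'ᶜ).ncard + T.ncard ≤ (f '' Tᶜ).ncard + T'.ncard := by
  have hle := hI.height_le_height hmin (binomialEdgeIdeal_le_cutIdeal hf')
  rw [height_cutIdeal, height_cutIdeal, Nat.cast_le] at hle
  have h := ncard_cutVars_add_ncard_image (T := T) (f := f)
  have h' := ncard_cutVars_add_ncard_image (T := T') (f := f')
  omega

lemma IsUnmixed.ncard_image_compl_le (hI : IsUnmixed (binomialEdgeIdeal K G)) (hG : G.Connected)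
    (hf : ∀ i j, G.Adj i j → i ∉ T → j ∉ T → f i = f j) :
    (f '' Tᶜ).ncard ≤ T.ncard + 1 := by
  have := hG.nonempty
  have hmin : cutIdeal K ∅ (fun _ : V => ()) ∈ (binomialEdgeIdeal K G).minimalPrimes :=
    cutIdeal_mem_minimalPrimes (by simp)
      (fun i j _ _ _ => (hG.preconnected i j).elim fun p => ⟨p, by simp⟩) (by simp)
  have h := hI.ncard_image_compl_add_le hmin hf
  simp only [Set.ncard_empty, add_zero, Set.compl_empty, Set.image_univ, Set.range_const,
    Set.ncard_singleton] at h
  omega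

lemma IsUnmixed.ncard_image_compl_eq (hI : IsUnmixed (binomialEdgeIdeal K G)) (hG : G.Connected)
    (hf : ∀ i j, G.Adj i j → i ∉ T → j ∉ T → f i = f j)
    (hconn : ∀ i j, i ∉ T → j ∉ T → f i = f j → ∃ p : G.Walk i j, ∀ v ∈ p.support, v ∉ T)
    (hcut : ∀ i ∈ T, ∃ a b, a ∉ T ∧ b ∉ T ∧ G.Adj a i ∧ G.Adj b i ∧ f a ≠ f b) :
    (f '' Tᶜ).ncard = T.ncard + 1 := by
  refine le_antisymm (hI.ncard_image_compl_le hG hf) ?_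
  have := hG.nonempty
  have hmin := cutIdeal_mem_minimalPrimes (K := K) hf hconn hcut
  have h := hI.ncard_image_compl_add_le hmin (f' := fun _ : V => ()) (T' := ∅) (by simp)
  simp only [Set.compl_empty, Set.image_univ, Set.range_const, Set.ncard_singleton,
    Set.ncard_empty, add_zero] at h
  omega

end Unmixed

end BinomialEdgeIdeal

section PathGraph

open SimpleGraph

lemma IsPathGraph.exists_iso {V : Type*} {H : SimpleGraph V} (h : IsPathGraph H) :
    ∃ m, Nonempty (H ≃g pathGraph m) := by
  obtain ⟨m, e, he⟩ := h
  exact ⟨m, ⟨e, by simp [pathGraph_adj, he]⟩⟩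

lemma IsPathGraph.preconnected {V : Type*} {H : SimpleGraph V} (h : IsPathGraph H) :
    H.Preconnected := by
  obtain ⟨m, ⟨e⟩⟩ := h.exists_iso
  exact e.preconnected_iff.2 (pathGraph_preconnected m)

lemma IsPathGraph.of_subsingleton {V : Type*} [Nonempty V] [Subsingleton V] (H : SimpleGraph V) :
    IsPathGraph H := by
  have := uniqueOfSubsingleton (Classical.arbitrary V)
  refine ⟨1, Equiv.ofUnique V (Fin 1), fun a b => ?_⟩
  simp [Subsingleton.elim a b]

lemma IsPathGraph.of_iso {V W : Type*} {H : SimpleGraph V} {H' : SimpleGraph W}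
    (h : IsPathGraph H) (φ : H' ≃g H) : IsPathGraph H' := by
  obtain ⟨m, e, he⟩ := h
  exact ⟨m, φ.toEquiv.trans e, fun a b => by rw [← φ.map_adj_iff, he]; rfl⟩

/-- The reversal of the path graph with `m` vertices. -/
def pathGraphRev (m : ℕ) : pathGraph m ≃g pathGraph m where
  toEquiv := Fin.revPerm
  map_rel_iff' {a b} := by
    simp only [pathGraph_adj, Fin.revPerm_apply, Fin.val_rev]
    omega

end PathGraph

section WhiskeredFourCycle

open SimpleGraph

variable {V : Type*} {G : SimpleGraph V} {w : Fin 4 → V} {π : V → Fin 4}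

/-- The graph `G` consists of a `4`-cycle `w 0, w 1, w 2, w 3` and pairwise disjoint path graphs,
one through each `w i`. The foot `π v` of a vertex `v` is the index of the path which contains it,
so these paths are the fibres of `π`; that of `i` is `{w i}` if no whisker is attached there. -/
structure IsWhiskeredFourCycle (G : SimpleGraph V) (w : Fin 4 → V) (π : V → Fin 4) : Prop where
  foot_cycle : ∀ i, π (w i) = i
  adj_iff : ∀ u v, π u ≠ π v → (G.Adj u v ↔ ∃ i, s(u, v) = s(w i, w (i + 1)))
  isPathGraph_fiber : ∀ i, IsPathGraph (G.induce (π ⁻¹' {i}))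

namespace IsWhiskeredFourCycle

lemma injective_cycle (S : IsWhiskeredFourCycle G w π) : Function.Injective w :=
  Function.LeftInverse.injective S.foot_cycle

lemma adj_cycle (S : IsWhiskeredFourCycle G w π) {i j : Fin 4} (h : j = i + 1 ∨ i = j + 1) :
    G.Adj (w i) (w j) := by
  refine (S.adj_iff _ _ ?_).2 ?_
  · rcases h with rfl | rfl <;> simp [S.foot_cycle]
  · rcases h with rfl | rfl
    exacts [⟨i, rfl⟩, ⟨j, Sym2.eq_swap⟩]

lemma exists_walk_of_foot_eq (S : IsWhiskeredFourCycle G w π) {u v : V} (h : π u = π v) :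
    ∃ p : G.Walk u v, ∀ x ∈ p.support, π x = π u := by
  obtain ⟨p⟩ := (S.isPathGraph_fiber (π u)).preconnected ⟨u, rfl⟩ ⟨v, h.symm⟩
  refine ⟨p.map (Embedding.induce _).toHom, fun x hx => ?_⟩
  obtain ⟨y, -, rfl⟩ := List.mem_map.1 (Walk.support_map _ p ▸ hx)
  exact y.2

lemma foot_eq_of_adj_of_notMem_opposite (S : IsWhiskeredFourCycle G w π) (i : Fin 4) {u v : V}
    (huv : G.Adj u v) (hu : u ∉ ({w i, w (i + 2)} : Set V)) (hv : v ∉ ({w i, w (i + 2)} : Set V)) :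
    π u = π v := by
  by_contra hne
  obtain ⟨k, hk⟩ := (S.adj_iff u v hne).1 huv
  have hik : k = i ∨ k = i + 2 ∨ k + 1 = i ∨ k + 1 = i + 2 := by lia
  rcases Sym2.eq_iff.1 hk with ⟨rfl, rfl⟩ | ⟨rfl, rfl⟩ <;>
    rcases hik with rfl | rfl | h | h <;> simp_all

lemma ncard_opposite (S : IsWhiskeredFourCycle G w π) (i : Fin 4) :
    ({w i, w (i + 2)} : Set V).ncard = 2 :=
  Set.ncard_pair <| S.injective_cycle.ne <| by simp

variable {K : Type*} [Field K]

-- Otherwise parts of all `4` paths survive, in different components of `G - {w i, w (i + 2)}`.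
lemma not_nontrivial_and_nontrivial_opposite (S : IsWhiskeredFourCycle G w π) [Finite V]
    (hG : G.Connected) (hI : IsUnmixed (binomialEdgeIdeal K G)) (i : Fin 4) :
    ¬ ((π ⁻¹' {i}).Nontrivial ∧ (π ⁻¹' {i + 2}).Nontrivial) := by
  rintro ⟨hi, hi2⟩
  have himage : π '' {w i, w (i + 2)}ᶜ = Set.univ := by
    refine Set.eq_univ_of_forall fun j => ?_
    by_cases hj : j = i ∨ j = i + 2
    · obtain ⟨v, hv, hvw⟩ : ∃ v ∈ π ⁻¹' {j}, v ≠ w j := by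
        rcases hj with rfl | rfl
        exacts [hi.exists_ne _, hi2.exists_ne _]
      refine ⟨v, ?_, hv⟩
      rintro (rfl | rfl) <;> exact hvw (by rw [← Set.mem_singleton_iff.1 hv, S.foot_cycle])
    · refine ⟨w j, ?_, S.foot_cycle j⟩
      simpa [S.injective_cycle.eq_iff] using hj
  have hle := hI.ncard_image_compl_le hG fun u v huv hu hv =>
    S.foot_eq_of_adj_of_notMem_opposite i huv hu hv
  rw [himage, S.ncard_opposite, Set.ncard_univ, Nat.card_fin] at hle
  omega

-- Otherwise `{w i, w (i + 2)}` is a minimal cut set with only `2` components.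
lemma nontrivial_or_nontrivial_opposite (S : IsWhiskeredFourCycle G w π) [Finite V]
    (hG : G.Connected) (hI : IsUnmixed (binomialEdgeIdeal K G)) (i : Fin 4) :
    (π ⁻¹' {i}).Nontrivial ∨ (π ⁻¹' {i + 2}).Nontrivial := by
  by_contra! h
  have hmem : ∀ {v}, v ∈ ({w i, w (i + 2)} : Set V) ↔ π v = i ∨ π v = i + 2 := by
    intro v
    constructor
    · rintro (rfl | rfl) <;> simp [S.foot_cycle]
    · rintro (hv | hv)
      · exact .inl (h.1 hv (S.foot_cycle i))
      · exact .inr (h.2 hv (S.foot_cycle _))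
  have himage : π '' {w i, w (i + 2)}ᶜ ⊆ {i + 1, i + 3} := by
    rintro _ ⟨v, hv, rfl⟩
    rw [Set.mem_compl_iff, hmem] at hv
    exact (by lia : π v = i + 1 ∨ π v = i + 3)
  have hcard := hI.ncard_image_compl_eq hG
    (fun u v huv hu hv => S.foot_eq_of_adj_of_notMem_opposite i huv hu hv)
    (fun u v hu _ huv => by
      obtain ⟨p, hp⟩ := S.exists_walk_of_foot_eq huv
      exact ⟨p, fun x hx => by rwa [hmem, hp x hx, ← hmem]⟩)
    (fun u hu => by
      refine ⟨w (i + 1), w (i + 3), ?_, ?_, ?_⟩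
      · simp [hmem, S.foot_cycle]
      · simp [hmem, S.foot_cycle]
      · rw [S.foot_cycle, S.foot_cycle]
        rcases hu with rfl | rfl <;>
          exact ⟨S.adj_cycle (by lia), S.adj_cycle (by lia), by simp⟩)
  have := (Set.ncard_le_ncard himage).trans (Set.ncard_insert_le _ _)
  rw [hcard, S.ncard_opposite, Set.ncard_singleton] at this
  omega

end IsWhiskeredFourCycle

section FootSide

variable {i : Fin 4} {m : ℕ}

open Classical in
/-- The colouring of the vertices other than `w i` by the piece which contains them after `w i` is
removed: `some true` and `some false` on the two sides of the position `a` in the fibre path over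
`i`, and `none` outside this fibre. -/
def footSide (e : G.induce (π ⁻¹' {i}) ≃g pathGraph m) (a : Fin m) (v : V) : Option Bool :=
  if h : π v = i then some (e ⟨v, h⟩ < a) else none

lemma footSide_of_ne (e : G.induce (π ⁻¹' {i}) ≃g pathGraph m) (a : Fin m) {v : V} (h : π v ≠ i) :
    footSide e a v = none := by
  simp [footSide, h]

lemma footSide_symm_apply (e : G.induce (π ⁻¹' {i}) ≃g pathGraph m) (a b : Fin m) :
    footSide e a (e.symm b) = some (decide (b < a)) := by
  have h : π (e.symm b) = i := (e.symm b).2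
  have hb : e ⟨e.symm b, h⟩ = b := e.apply_symm_apply b
  rw [footSide, dif_pos h, hb]

lemma exists_symm_apply_eq (e : G.induce (π ⁻¹' {i}) ≃g pathGraph m) {v : V} (h : π v = i) :
    ∃ b, (e.symm b : V) = v :=
  ⟨e ⟨v, h⟩, by simp⟩

lemma adj_symm_apply_iff (e : G.induce (π ⁻¹' {i}) ≃g pathGraph m) {a b : Fin m} :
    G.Adj (e.symm a) (e.symm b) ↔ (a : ℕ) + 1 = b ∨ (b : ℕ) + 1 = a := by
  rw [← pathGraph_adj, ← e.symm.map_adj_iff, comap_adj]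
  rfl

end FootSide

namespace IsWhiskeredFourCycle

variable {K : Type*} [Field K] {i : Fin 4} {m : ℕ}

lemma symm_apply_eq_cycle_iff (S : IsWhiskeredFourCycle G w π)
    (e : G.induce (π ⁻¹' {i}) ≃g pathGraph m) {b : Fin m} {j : Fin 4} :
    (e.symm b : V) = w j ↔ j = i ∧ b = e ⟨w i, S.foot_cycle i⟩ := by
  constructor
  · intro h
    obtain rfl : j = i := by rw [← S.foot_cycle j, ← h]; exact (e.symm b).2
    exact ⟨rfl, by simp [← h]⟩
  · rintro ⟨rfl, rfl⟩
    simp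

lemma footSide_eq_of_adj (S : IsWhiskeredFourCycle G w π)
    (e : G.induce (π ⁻¹' {i}) ≃g pathGraph m) {u v : V} (huv : G.Adj u v)
    (hu : u ∉ ({w i} : Set V)) (hv : v ∉ ({w i} : Set V)) :
    footSide e (e ⟨w i, S.foot_cycle i⟩) u = footSide e (e ⟨w i, S.foot_cycle i⟩) v := by
  by_cases hi : π u = i ∧ π v = i
  · obtain ⟨b, rfl⟩ := exists_symm_apply_eq e hi.1
    obtain ⟨c, rfl⟩ := exists_symm_apply_eq e hi.2
    rw [Set.mem_singleton_iff, S.symm_apply_eq_cycle_iff] at hu hv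
    rw [adj_symm_apply_iff] at huv
    simp only [footSide_symm_apply, Option.some.injEq, decide_eq_decide]
    lia
  have hout : π u ≠ i ∧ π v ≠ i := by
    by_cases hπ : π u = π v
    · lia
    · obtain ⟨k, hk⟩ := (S.adj_iff u v hπ).1 huv
      rcases Sym2.eq_iff.1 hk with ⟨rfl, rfl⟩ | ⟨rfl, rfl⟩ <;>
        simp_all [S.foot_cycle, S.injective_cycle.eq_iff]
  rw [footSide_of_ne _ _ hout.1, footSide_of_ne _ _ hout.2]

-- Otherwise the fibre path is cut in two and `G - {w i}` has `3` components.
lemma foot_add_one_eq_of_pos (S : IsWhiskeredFourCycle G w π) [Finite V] (hG : G.Connected)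
    (hI : IsUnmixed (binomialEdgeIdeal K G)) (e : G.induce (π ⁻¹' {i}) ≃g pathGraph m)
    (hpos : 0 < (e ⟨w i, S.foot_cycle i⟩ : ℕ)) : (e ⟨w i, S.foot_cycle i⟩ : ℕ) + 1 = m := by
  refine le_antisymm (e ⟨w i, S.foot_cycle i⟩).isLt ?_
  have hle := hI.ncard_image_compl_le hG fun u v => S.footSide_eq_of_adj e
  by_contra! hm
  set a := e ⟨w i, S.foot_cycle i⟩ with ha
  have hside : ∀ b ≠ a, some (decide (b < a)) ∈ footSide e a '' {w i}ᶜ := fun b hb =>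
    ⟨e.symm b, by simpa [S.symm_apply_eq_cycle_iff] using hb, footSide_symm_apply e a b⟩
  have himage : footSide e a '' {w i}ᶜ = Set.univ := by
    refine Set.eq_univ_of_forall fun c => ?_
    match c with
    | none =>
      exact ⟨w (i + 1), by simp [S.injective_cycle.eq_iff],
        footSide_of_ne e a (by simp [S.foot_cycle])⟩
    | some true =>
      have hlt : (⟨0, by lia⟩ : Fin m) < a := hpos
      simpa [hlt] using hside _ hlt.ne
    | some false =>
      have hlt : a < (⟨a + 1, hm⟩ : Fin m) := Nat.lt_succ_self _
      simpa [hlt.not_gt] using hside _ hlt.ne'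
  rw [himage, Set.ncard_univ] at hle
  simp at hle

lemma exists_iso_pathGraph_foot_eq_zero (S : IsWhiskeredFourCycle G w π) [Finite V]
    (hG : G.Connected) (hI : IsUnmixed (binomialEdgeIdeal K G)) (i : Fin 4) :
    ∃ (m : ℕ) (e : G.induce (π ⁻¹' {i}) ≃g pathGraph m),
      (e ⟨w i, S.foot_cycle i⟩ : ℕ) = 0 := by
  obtain ⟨m, ⟨e⟩⟩ := (S.isPathGraph_fiber i).exists_iso
  rcases Nat.eq_zero_or_pos (e ⟨w i, S.foot_cycle i⟩) with h | h
  · exact ⟨m, e, h⟩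
  · refine ⟨m, e.trans (pathGraphRev m), ?_⟩
    have := S.foot_add_one_eq_of_pos hG hI e h
    simp [pathGraphRev, this]

end IsWhiskeredFourCycle

/-- An arm of a whiskered `4`-cycle: the path graph which starts at the bare cycle vertex `w j`, and
continues with the neighbour `w i` and the whisker attached at `w i`. -/
structure IsArm (w : Fin 4 → V) (π : V → Fin 4) (j i : Fin 4) {m : ℕ} (u : pathGraph m ↪g G) :
    Prop where
  eq_cycle_iff : ∀ a k, u a = w k ↔ (k = j ∧ (a : ℕ) = 0) ∨ (k = i ∧ (a : ℕ) = 1)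
  mem_range_iff : ∀ v, v ∈ Set.range u ↔ π v = j ∨ π v = i

namespace IsWhiskeredFourCycle

variable {K : Type*} [Field K] {i j : Fin 4} {m n : ℕ}

lemma adj_cycle_symm_apply_iff (S : IsWhiskeredFourCycle G w π)
    (e : G.induce (π ⁻¹' {i}) ≃g pathGraph m) (hij : i = j + 1 ∨ j = i + 1) {b : Fin m} :
    G.Adj (w j) (e.symm b) ↔ b = e ⟨w i, S.foot_cycle i⟩ := by
  constructor
  · intro h
    have hb : π (e.symm b) = i := (e.symm b).2
    have hne : π (w j) ≠ π (e.symm b) := by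
      rw [S.foot_cycle, hb]
      lia
    obtain ⟨k, hk⟩ := (S.adj_iff _ _ hne).1 h
    rcases Sym2.eq_iff.1 hk with ⟨-, hk⟩ | ⟨-, hk⟩ <;>
      exact ((S.symm_apply_eq_cycle_iff e).1 hk).2
  · rintro rfl
    simpa using S.adj_cycle hij

/-- The fibre path over `i`, preceded by the cycle vertex `w j`. -/
def armEmbedding (S : IsWhiskeredFourCycle G w π) (e : G.induce (π ⁻¹' {i}) ≃g pathGraph m)
    (he : (e ⟨w i, S.foot_cycle i⟩ : ℕ) = 0) (hij : i = j + 1 ∨ j = i + 1) :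
    pathGraph (m + 1) ↪g G where
  toFun := Fin.cons (w j) fun a => (e.symm a : V)
  inj' := by
    refine Fin.cons_injective_iff.2 ⟨?_, Subtype.val_injective.comp e.symm.injective⟩
    rintro ⟨a, ha⟩
    have := ((S.symm_apply_eq_cycle_iff e).1 ha).1
    lia
  map_rel_iff' {a b} := by
    refine Fin.cases ?_ (fun a => ?_) a <;> refine Fin.cases ?_ (fun b => ?_) b <;>
      simp [pathGraph_adj, adj_symm_apply_iff, S.adj_cycle_symm_apply_iff e hij, G.adj_comm _ (w j),
        Fin.ext_iff, he]

lemma isArm_armEmbedding (S : IsWhiskeredFourCycle G w π)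
    (e : G.induce (π ⁻¹' {i}) ≃g pathGraph m) (he : (e ⟨w i, S.foot_cycle i⟩ : ℕ) = 0)
    (hij : i = j + 1 ∨ j = i + 1) (hj : (π ⁻¹' {j}).Subsingleton) :
    IsArm w π j i (S.armEmbedding e he hij) := by
  refine ⟨fun a k => ?_, fun v => ?_⟩
  · refine Fin.cases ?_ (fun a => ?_) a
    · simp [armEmbedding, S.injective_cycle.eq_iff, eq_comm]
    · simp [armEmbedding, S.symm_apply_eq_cycle_iff, Fin.ext_iff, he]
  · have hrange : Set.range (S.armEmbedding e he hij) = insert (w j) (π ⁻¹' {i}) := by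
      rw [← Subtype.range_coe (s := π ⁻¹' {i}), ← e.symm.surjective.range_comp]
      exact Fin.range_cons _ _
    have hfiber : v = w j ↔ π v = j := by
      rw [← Set.mem_singleton_iff, ← hj.eq_singleton_of_mem (S.foot_cycle j)]
      rfl
    rw [hrange, Set.mem_insert_iff, hfiber]
    rfl

lemma exists_isArm (S : IsWhiskeredFourCycle G w π) [Finite V] (hG : G.Connected)
    (hI : IsUnmixed (binomialEdgeIdeal K G)) (hij : i = j + 1 ∨ j = i + 1)
    (hi : (π ⁻¹' {i}).Nontrivial) (hj : (π ⁻¹' {j}).Subsingleton) :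
    ∃ m, 3 ≤ m ∧ ∃ u : pathGraph m ↪g G, IsArm w π j i u := by
  obtain ⟨m, e, he⟩ := S.exists_iso_pathGraph_foot_eq_zero hG hI i
  have : Nontrivial (Fin m) := e.toEquiv.nontrivial_congr.1 hi.coe_sort
  exact ⟨m + 1, by have := Fin.nontrivial_iff_two_le.1 this; lia, _,
    S.isArm_armEmbedding e he hij hj⟩

end IsWhiskeredFourCycle

section Gluing

variable {p : Fin 4} {m n : ℕ} {u : pathGraph m ↪g G} {v : pathGraph n ↪g G}

lemma IsArm.foot_ne_foot (hu : IsArm w π (p + 3) p u) (hv : IsArm w π (p + 2) (p + 1) v)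
    (a : Fin m) (b : Fin n) : π (u a) ≠ π (v b) := by
  have ha := (hu.mem_range_iff _).1 ⟨a, rfl⟩
  have hb := (hv.mem_range_iff _).1 ⟨b, rfl⟩
  lia

namespace IsWhiskeredFourCycle

lemma adj_arm_iff (S : IsWhiskeredFourCycle G w π) (hu : IsArm w π (p + 3) p u)
    (hv : IsArm w π (p + 2) (p + 1) v) (a : Fin m) (b : Fin n) :
    G.Adj (u a) (v b) ↔ ((a : ℕ) = 0 ∧ (b : ℕ) = 0) ∨ ((a : ℕ) = 1 ∧ (b : ℕ) = 1) := by
  rw [S.adj_iff _ _ (hu.foot_ne_foot hv a b)]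
  simp only [Sym2.eq_iff, hu.eq_cycle_iff, hv.eq_cycle_iff]
  constructor
  · rintro ⟨k, h⟩
    lia
  · rintro (h | h)
    · exact ⟨p + 2, by lia⟩
    · exact ⟨p, by lia⟩

lemma nonempty_iso_graphG4 (S : IsWhiskeredFourCycle G w π) (hu : IsArm w π (p + 3) p u)
    (hv : IsArm w π (p + 2) (p + 1) v) : Nonempty (G ≃g graphG4 m n) := by
  have hbij : Function.Bijective (Sum.elim u v) := by
    refine ⟨u.injective.sumElim v.injective fun a b h =>
      hu.foot_ne_foot hv a b (congrArg π h), ?_⟩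
    rw [← Set.range_eq_univ, Set.Sum.elim_range, Set.eq_univ_iff_forall]
    intro x
    rw [Set.mem_union, hu.mem_range_iff, hv.mem_range_iff]
    lia
  refine ⟨RelIso.symm ⟨Equiv.ofBijective _ hbij, fun {x y} => ?_⟩⟩
  rcases x with a | a <;> rcases y with b | b <;>
    simp only [Equiv.ofBijective_apply, Sum.elim_inl, Sum.elim_inr, graphG4, fromRel_adj, g4Rel]
  · simp only [Embedding.map_adj_iff, pathGraph_adj, ne_eq, Sum.inl.injEq, iff_and_self]
    lia
  · simp [S.adj_arm_iff hu hv]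
  · simp [G.adj_comm (v a), S.adj_arm_iff hu hv]
  · simp only [Embedding.map_adj_iff, pathGraph_adj, ne_eq, Sum.inr.injEq, iff_and_self]
    lia

end IsWhiskeredFourCycle

end Gluing

lemma exists_consecutive_of_opposite {W : Fin 4 → Prop} (hW : ∀ i, ¬ (W i ∧ W (i + 2)))
    (hB : ∀ i, W i ∨ W (i + 2)) : ∃ p, W p ∧ W (p + 1) ∧ ¬ W (p + 2) ∧ ¬ W (p + 3) := by
  have h0 : ¬ (W 0 ∧ W 2) := hW 0
  have h1 : ¬ (W 1 ∧ W 3) := hW 1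
  have h2 : W 0 ∨ W 2 := hB 0
  have h3 : W 1 ∨ W 3 := hB 1
  by_cases h4 : W 0 <;> by_cases h5 : W 1
  · exact ⟨0, h4, h5, fun h => h0 ⟨h4, h⟩, fun h => h1 ⟨h5, h⟩⟩
  · exact ⟨3, h3.resolve_left h5, h4, h5, fun h => h0 ⟨h4, h⟩⟩
  · exact ⟨1, h5, h2.resolve_left h4, fun h => h1 ⟨h5, h⟩, h4⟩
  · exact ⟨2, h2.resolve_left h4, h3.resolve_left h5, h4, h5⟩

theorem IsWhiskeredFourCycle.exists_iso_graphG4 {K : Type*} [Field K] [Finite V]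
    (S : IsWhiskeredFourCycle G w π) (hG : G.Connected) (hI : IsUnmixed (binomialEdgeIdeal K G)) :
    ∃ a b : ℕ, 3 ≤ a ∧ 3 ≤ b ∧ Nonempty (G ≃g graphG4 a b) := by
  obtain ⟨p, hp0, hp1, hp2, hp3⟩ := exists_consecutive_of_opposite
    (S.not_nontrivial_and_nontrivial_opposite hG hI) (S.nontrivial_or_nontrivial_opposite hG hI)
  rw [Set.not_nontrivial_iff] at hp2 hp3
  obtain ⟨a, ha, u, hu⟩ := S.exists_isArm hG hI (by lia) hp0 hp3
  obtain ⟨b, hb, v, hv⟩ := S.exists_isArm hG hI (by lia) hp1 hp2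
  exact ⟨a, b, ha, hb, S.nonempty_iso_graphG4 hu hv⟩

end WhiskeredFourCycle

section Decomposition

open SimpleGraph

variable {V ι : Type*} {G : SimpleGraph V} {C : G.Subgraph} {P : ι → G.Subgraph} {φ : V → V}
  {k l : ι} {u v x : V}

lemma IsCycleGraphOfLength.exists_parametrization {l : ℕ} [NeZero l]
    (hC : IsCycleGraphOfLength C.coe l) :
    ∃ w : Fin l → V, Function.Injective w ∧ Set.range w = C.verts ∧
      ∀ u v, C.Adj u v ↔ ∃ i, s(u, v) = s(w i, w (i + 1)) := by
  obtain ⟨e, he⟩ := hC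
  have hstep : ∀ i j : Fin l, ((i : ℕ) + 1) % l = j ↔ j = i + 1 := fun i j => by
    rw [Fin.ext_iff, Fin.val_add, Fin.val_one', Nat.add_mod_mod, eq_comm]
  have hrange : Set.range (fun i => (e.symm i : V)) = C.verts :=
    (e.symm.surjective.range_comp Subtype.val).trans Subtype.range_coe
  refine ⟨fun i => e.symm i, Subtype.val_injective.comp e.symm.injective, hrange, fun u v => ?_⟩
  have hadj : ∀ i j, C.Adj (e.symm i) (e.symm j) ↔ j = i + 1 ∨ i = j + 1 := fun i j => by
    simpa [hstep] using he (e.symm i) (e.symm j)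
  constructor
  · intro huv
    obtain ⟨i, rfl⟩ := hrange ▸ C.edge_vert huv
    obtain ⟨j, rfl⟩ := hrange ▸ C.edge_vert huv.symm
    rcases (hadj i j).1 huv with rfl | rfl
    exacts [⟨i, rfl⟩, ⟨j, Sym2.eq_swap⟩]
  · rintro ⟨i, h⟩
    rcases Sym2.eq_iff.1 h with ⟨rfl, rfl⟩ | ⟨rfl, rfl⟩
    exacts [(hadj _ _).2 (.inl rfl), (hadj _ _).2 (.inr rfl)]

/-- The graph `G` is the union of a core `C` and of pairwise disjoint subgraphs `P k`, the whiskers,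
each of which meets `C` in exactly one vertex. -/
structure IsWhiskering (C : G.Subgraph) (P : ι → G.Subgraph) : Prop where
  sup_eq_top : C ⊔ ⨆ k, P k = ⊤
  ncard_inter : ∀ k, ((P k).verts ∩ C.verts).ncard = 1
  inter_eq_empty : ∀ k l, k ≠ l → (P k).verts ∩ (P l).verts = ∅

/-- The map `φ` sends the vertices of each whisker to the vertex in which it meets the core, and
fixes the core. -/
structure IsFootMap (C : G.Subgraph) (P : ι → G.Subgraph) (φ : V → V) : Prop where
  apply_mem_core : ∀ v, φ v ∈ C.verts
  apply_of_mem_core : ∀ v ∈ C.verts, φ v = v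
  apply_mem_whisker : ∀ k, ∀ v ∈ (P k).verts, φ v ∈ (P k).verts

namespace IsWhiskering

lemma adj_iff (D : IsWhiskering C P) : G.Adj u v ↔ C.Adj u v ∨ ∃ k, (P k).Adj u v := by
  rw [← Subgraph.top_adj, ← D.sup_eq_top, Subgraph.sup_adj, Subgraph.iSup_adj]

lemma mem_core_or_exists_mem (D : IsWhiskering C P) (v : V) :
    v ∈ C.verts ∨ ∃ k, v ∈ (P k).verts := by
  have hv : v ∈ (C ⊔ ⨆ k, P k).verts := D.sup_eq_top ▸ trivial
  simpa using hv

lemma eq_of_mem_of_mem (D : IsWhiskering C P) (hk : v ∈ (P k).verts) (hl : v ∈ (P l).verts) :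
    k = l := by
  by_contra hkl
  exact Set.eq_empty_iff_forall_notMem.1 (D.inter_eq_empty k l hkl) v ⟨hk, hl⟩

lemma core_vertex_unique (D : IsWhiskering C P) (hu : u ∈ (P k).verts) (huC : u ∈ C.verts)
    (hv : v ∈ (P k).verts) (hvC : v ∈ C.verts) : u = v := by
  obtain ⟨x, hx⟩ := Set.ncard_eq_one.1 (D.ncard_inter k)
  have : ((P k).verts ∩ C.verts).Subsingleton := hx ▸ Set.subsingleton_singleton
  exact this ⟨hu, huC⟩ ⟨hv, hvC⟩

lemma exists_isFootMap (D : IsWhiskering C P) : ∃ φ, IsFootMap C P φ := by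
  have hfoot : ∀ v, ∃ x ∈ C.verts, (v ∈ C.verts → x = v) ∧
      ∀ k, v ∈ (P k).verts → x ∈ (P k).verts := by
    intro v
    by_cases hv : v ∈ C.verts
    · exact ⟨v, hv, fun _ => rfl, fun _ => id⟩
    · obtain ⟨k, hk⟩ := (D.mem_core_or_exists_mem v).resolve_left hv
      obtain ⟨x, hx⟩ := Set.nonempty_of_ncard_ne_zero (D.ncard_inter k ▸ one_ne_zero)
      exact ⟨x, hx.2, fun h => absurd h hv, fun l hl => D.eq_of_mem_of_mem hk hl ▸ hx.1⟩
  choose φ hφ using hfoot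
  exact ⟨φ, fun v => (hφ v).1, fun v => (hφ v).2.1, fun k v => (hφ v).2.2 k⟩

lemma foot_eq_of_mem (D : IsWhiskering C P) (F : IsFootMap C P φ) (hu : u ∈ (P k).verts)
    (hv : v ∈ (P k).verts) : φ u = φ v :=
  D.core_vertex_unique (F.apply_mem_whisker k u hu) (F.apply_mem_core u)
    (F.apply_mem_whisker k v hv) (F.apply_mem_core v)

lemma adj_iff_of_foot_ne (D : IsWhiskering C P) (F : IsFootMap C P φ) (h : φ u ≠ φ v) :
    G.Adj u v ↔ C.Adj u v := by
  rw [D.adj_iff, or_iff_left]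
  rintro ⟨k, huv⟩
  exact h (D.foot_eq_of_mem F ((P k).edge_vert huv) ((P k).edge_vert huv.symm))

lemma mem_whisker_iff (D : IsWhiskering C P) (F : IsFootMap C P φ) (hx : x ∈ C.verts)
    (hxk : x ∈ (P k).verts) : v ∈ (P k).verts ↔ φ v = x := by
  rw [← F.apply_of_mem_core x hx]
  refine ⟨fun hv => D.foot_eq_of_mem F hv hxk, fun h => ?_⟩
  rw [F.apply_of_mem_core x hx] at h
  rcases D.mem_core_or_exists_mem v with hv | ⟨l, hl⟩
  · rwa [← F.apply_of_mem_core v hv, h]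
  · rwa [D.eq_of_mem_of_mem hxk (h ▸ F.apply_mem_whisker l v hl)]

lemma adj_iff_of_mem_whisker (D : IsWhiskering C P) (hu : u ∈ (P k).verts)
    (hv : v ∈ (P k).verts) : G.Adj u v ↔ (P k).Adj u v := by
  refine ⟨fun h => ?_, fun h => h.adj_sub⟩
  rcases D.adj_iff.1 h with hC | ⟨l, hl⟩
  · exact absurd (D.core_vertex_unique hu (C.edge_vert hC) hv (C.edge_vert hC.symm)) h.ne
  · rwa [D.eq_of_mem_of_mem hu ((P l).edge_vert hl)]

lemma isPathGraph_fiber (D : IsWhiskering C P) (F : IsFootMap C P φ)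
    (hP : ∀ k, IsPathGraph (P k).coe) (hx : x ∈ C.verts) :
    IsPathGraph (G.induce (φ ⁻¹' {x})) := by
  by_cases hxP : ∃ k, x ∈ (P k).verts
  · obtain ⟨k, hxk⟩ := hxP
    have hmem : ∀ v, v ∈ φ ⁻¹' {x} ↔ v ∈ (P k).verts := fun v => (D.mem_whisker_iff F hx hxk).symm
    refine (hP k).of_iso ⟨Equiv.subtypeEquivRight hmem, fun {u v} => ?_⟩
    exact (D.adj_iff_of_mem_whisker ((hmem u).1 u.2) ((hmem v).1 v.2)).symm
  · have hfiber : φ ⁻¹' {x} = {x} := by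
      ext v
      refine ⟨fun hv => ?_, fun hv => hv ▸ F.apply_of_mem_core x hx⟩
      rcases D.mem_core_or_exists_mem v with hvC | ⟨k, hk⟩
      · exact (F.apply_of_mem_core v hvC).symm.trans hv
      · exact absurd ⟨k, hv ▸ F.apply_mem_whisker k v hk⟩ hxP
    rw [hfiber]
    exact IsPathGraph.of_subsingleton _

lemma exists_isWhiskeredFourCycle (D : IsWhiskering C P) (hC : IsCycleGraphOfLength C.coe 4)
    (hP : ∀ k, IsPathGraph (P k).coe) : ∃ w π, IsWhiskeredFourCycle G w π := by
  obtain ⟨φ, F⟩ := D.exists_isFootMap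
  obtain ⟨w, hw, hrange, hadj⟩ := hC.exists_parametrization
  have hφ : ∀ v, φ v ∈ Set.range w := fun v => hrange ▸ F.apply_mem_core v
  choose π hπ using hφ
  have hmem : ∀ i, w i ∈ C.verts := fun i => hrange ▸ ⟨i, rfl⟩
  refine ⟨w, π, fun i => hw ?_, fun u v huv => ?_, fun i => ?_⟩
  · rw [hπ, F.apply_of_mem_core _ (hmem i)]
  · rw [D.adj_iff_of_foot_ne F fun h => huv (hw (by rw [hπ, hπ, h])), hadj]
  · have hfiber : π ⁻¹' {i} = φ ⁻¹' {w i} := by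
      ext v
      simp [← hπ, hw.eq_iff]
    exact hfiber ▸ D.isPathGraph_fiber F hP (hmem i)

end IsWhiskering

end Decomposition

/-- Let `G` be a connected unicyclic graph of the form
`G = C_4 ∪ (P_1 ∪ ⋯ ∪ P_r)`, where `C_4` is a cycle of length `4`, each `P_i` is a
path graph meeting `C_4` in exactly one vertex, and the `P_i` are pairwise
vertex-disjoint. If `G` does not belong to the family `𝒢₄`, then `J_G` is not
unmixed. -/
theorem binomialEdgeIdeal_not_unmixed_of_c4_not_mem_G4
    (K : Type*) [Field K] (n : ℕ) (G : SimpleGraph (Fin n))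
    (hConn : G.Connected) (hUni : G.edgeSet.ncard = n)
    (r : ℕ) (hr : r ≤ 4) (C : G.Subgraph) (P : Fin r → G.Subgraph)
    (hC : IsCycleGraphOfLength C.coe 4)
    (hP : ∀ i, IsPathGraph (P i).coe)
    (hPC : ∀ i, ((P i).verts ∩ C.verts).ncard = 1)
    (hPP : ∀ i j, i ≠ j → (P i).verts ∩ (P j).verts = ∅)
    (hcover : C ⊔ (⨆ i, P i) = ⊤)
    (hG4 : ¬ ∃ (a b : ℕ), 3 ≤ a ∧ 3 ≤ b ∧ Nonempty (G ≃g graphG4 a b)) :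
    ¬ IsUnmixed (binomialEdgeIdeal K G) := by
  intro hI
  have D : IsWhiskering C P := ⟨hcover, hPC, hPP⟩
  obtain ⟨w, π, S⟩ := D.exists_isWhiskeredFourCycle hC hP
  exact hG4 (S.exists_iso_graphG4 hConn hI)

end
end

section
/- For every T ⊆ [n], the ideal P_T(G) is a prime ideal of S. -/
open MvPolynomial

noncomputable section

/-- The prime `P_T(G)` associated with a subset `T` of the vertices: it is generated
by the variables `x_i, y_i` for `i ∈ T` together with the binomial edge ideals of the
complete graphs on the connected components of the subgraph of `G` induced on the
complement of `T` (i.e. all `2`-minors `x_i y_j - x_j y_i` for distinct vertices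
`i, j ∉ T` lying in the same connected component of that induced subgraph). -/
def PTIdeal (K : Type*) [Field K] {n : ℕ} (G : SimpleGraph (Fin n)) (T : Set (Fin n)) :
    Ideal (MvPolynomial (Fin n ⊕ Fin n) K) :=
  Ideal.span
    ({ f | ∃ i ∈ T, f = X (Sum.inl i) } ∪ { f | ∃ i ∈ T, f = X (Sum.inr i) } ∪
      { f | ∃ (i j : Fin n) (hi : i ∈ Tᶜ) (hj : j ∈ Tᶜ), i ≠ j ∧
        (G.induce Tᶜ).Reachable ⟨i, hi⟩ ⟨j, hj⟩ ∧
        f = X (Sum.inl i) * X (Sum.inr j) - X (Sum.inl j) * X (Sum.inr i) })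

/-- The number of connected components of the subgraph of `G` induced on `U`. -/
def cNum {n : ℕ} (G : SimpleGraph (Fin n)) (U : Set (Fin n)) : ℕ :=
  Nat.card (G.induce U).ConnectedComponent

/-- `T` has the cutpoint property for `G`: every `i ∈ T` is a cutpoint of the
subgraph of `G` induced on `([n] ∖ T) ∪ {i}`, i.e. removing `i` from that graph
increases the number of connected components. -/
def HasCutpointProperty {n : ℕ} (G : SimpleGraph (Fin n)) (T : Set (Fin n)) : Prop :=
  ∀ i ∈ T, cNum G (Tᶜ ∪ {i}) < cNum G Tᶜ

/-!
Setting the variables indexed by `T` to zero reduces the claim to `T = ∅`, where `P_T(G)` is the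
ideal of all minors `x_i y_j - x_j y_i` with `c i = c j`, for `c` the map sending a vertex to its
connected component. This ideal is the kernel of the map to a domain given by
`x_i ↦ t_i a_{c i}`, `y_i ↦ t_i`. The image of a monomial is again a monomial, which records
the multiset of all its vertices and the multiset of components of its `x`-variables. Two monomials
for which these agree are related by exchanges `x_j y_i ↔ x_i y_j` with `c i = c j`, hence are
congruent modulo the minors, and differences of such pairs span the kernel.
-/

lemma ker_le_of_basis_sub_mem {R M M' ι κ : Type*} [CommRing R] [AddCommGroup M]
    [AddCommGroup M'] [Module R M] [Module R M'] (b : Module.Basis ι R M)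
    (b' : Module.Basis κ R M') {φ : M →ₗ[R] M'} {e : ι → κ} (hφ : ∀ i, φ (b i) = b' (e i))
    {N : Submodule R M} (hN : ∀ i j, e i = e j → b i - b j ∈ N) : LinearMap.ker φ ≤ N := by
  have hfactor : (N.mkQ ∘ b).FactorsThrough e := fun i j h =>
    (Submodule.Quotient.eq N).mpr (hN i j h)
  let ψ : M' →ₗ[R] M ⧸ N := b'.constr R (Function.extend e (N.mkQ ∘ b) 0)
  have hψ : ψ ∘ₗ φ = N.mkQ := b.ext fun i => by
    rw [LinearMap.comp_apply, hφ, Module.Basis.constr_basis, hfactor.extend_apply,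
      Function.comp_apply]
  calc LinearMap.ker φ ≤ LinearMap.ker (ψ ∘ₗ φ) := LinearMap.ker_le_ker_comp φ ψ
    _ = N := by rw [hψ, Submodule.ker_mkQ]

lemma compl_range_sumMap {α β α' β' : Type*} (f : α → α') (g : β → β') :
    (Set.range (Sum.map f g))ᶜ = Sum.inl '' (Set.range f)ᶜ ∪ Sum.inr '' (Set.range g)ᶜ := by
  ext (v | v) <;> simp

section KillCompl

variable {σ τ R : Type*} {f : σ → τ}

lemma killCompl_X_of_notMem_range [CommSemiring R] (hf : f.Injective) {v : τ}
    (hv : v ∉ Set.range f) : killCompl hf (X v : MvPolynomial τ R) = 0 := by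
  rw [killCompl, aeval_X, dif_neg hv]

variable [CommRing R]

lemma sub_rename_killCompl_mem_span (hf : f.Injective) (p : MvPolynomial τ R) :
    p - rename f (killCompl hf p) ∈ Ideal.span (X '' (Set.range f)ᶜ) := by
  set I : Ideal (MvPolynomial τ R) := Ideal.span (X '' (Set.range f)ᶜ)
  suffices h : Ideal.Quotient.mkₐ R I =
      (Ideal.Quotient.mkₐ R I).comp ((rename f).comp (killCompl hf)) from
    Ideal.Quotient.eq.mp (DFunLike.congr_fun h p)
  ext v
  by_cases hv : v ∈ Set.range f
  · obtain ⟨u, rfl⟩ := hv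
    rw [← rename_X, AlgHom.comp_apply, AlgHom.comp_apply, killCompl_rename_app]
  · simpa [killCompl_X_of_notMem_range hf hv] using
      Ideal.Quotient.eq_zero_iff_mem.mpr (Ideal.subset_span (Set.mem_image_of_mem X hv))

lemma comap_killCompl (hf : f.Injective) (I : Ideal (MvPolynomial σ R)) :
    I.comap (killCompl hf) = I.map (rename f) ⊔ Ideal.span (X '' (Set.range f)ᶜ) := by
  apply le_antisymm
  · intro p hp
    rw [← add_sub_cancel (rename f (killCompl hf p)) p]
    exact Submodule.add_mem_sup (Ideal.mem_map_of_mem _ hp) (sub_rename_killCompl_mem_span hf p)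
  · refine sup_le (Ideal.map_le_iff_le_comap.mpr fun p hp => ?_) (Ideal.span_le.mpr ?_)
    · simpa using hp
    · rintro _ ⟨v, hv, rfl⟩
      simp [killCompl_X_of_notMem_range hf hv]

end KillCompl

lemma prod_map_mul_prod_map_eq_of_swap {V C M : Type*} [CommMonoid M] {c : V → C} {x y : V → M}
    (hxy : ∀ i j, c i = c j → x i * y j = x j * y i) {p q p' q' : Multiset V}
    (hadd : p + q = p' + q') (hc : p.map c = p'.map c) :
    (p.map x).prod * (q.map y).prod = (p'.map x).prod * (q'.map y).prod := by
  induction p' using Multiset.induction generalizing p q with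
  | empty =>
    obtain rfl : p = 0 := by simpa using hc
    obtain rfl : q = q' := by simpa using hadd
    rfl
  | cons i p' ih =>
    by_cases hip : i ∈ p
    · obtain ⟨p, rfl⟩ := Multiset.exists_cons_of_mem hip
      have := ih (p := p) (q := q) (by simpa using hadd) (by simpa using hc)
      simp [mul_assoc, this]
    -- The factor `y i` must occur, so it can be exchanged for `x i` against some `x j`.
    · have hiq : i ∈ q := by
        have : i ∈ p + q := hadd ▸ by simp
        exact (Multiset.mem_add.mp this).resolve_left hip
      obtain ⟨j, hjp, hji⟩ : ∃ j ∈ p, c j = c i := Multiset.mem_map.mp (hc ▸ by simp)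
      obtain ⟨p, rfl⟩ := Multiset.exists_cons_of_mem hjp
      obtain ⟨q, rfl⟩ := Multiset.exists_cons_of_mem hiq
      have hrec := ih (p := p) (q := j ::ₘ q)
        ((Multiset.cons_inj_right i).mp (by simpa [Multiset.cons_swap] using hadd))
        (by simpa [hji] using hc)
      calc ((j ::ₘ p).map x).prod * ((i ::ₘ q).map y).prod
          = (x j * y i) * ((p.map x).prod * (q.map y).prod) := by
            simp only [Multiset.map_cons, Multiset.prod_cons, mul_mul_mul_comm]
        _ = (x i * y j) * ((p.map x).prod * (q.map y).prod) := by rw [hxy j i hji]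
        _ = x i * ((p.map x).prod * ((j ::ₘ q).map y).prod) := by
            simp only [Multiset.map_cons, Multiset.prod_cons]
            ac_rfl
        _ = ((i ::ₘ p').map x).prod * (q'.map y).prod := by
            rw [hrec, Multiset.map_cons, Multiset.prod_cons, mul_assoc]

open Classical in
/-- The monomial basis of a polynomial ring in two families of variables. A monomial is
encoded by the multisets of variables of each family that it is the product of. -/
def basisSumMonomials (α β R : Type*) [CommSemiring R] :
    Module.Basis (Multiset α × Multiset β) R (MvPolynomial (α ⊕ β) R) :=
  (basisMonomials (α ⊕ β) R).reindex <| Finsupp.sumFinsuppEquivProdFinsupp.trans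
    (Multiset.toFinsupp.toEquiv.prodCongr Multiset.toFinsupp.toEquiv).symm

lemma basisSumMonomials_apply {α β R : Type*} [CommSemiring R] (p : Multiset α)
    (q : Multiset β) :
    basisSumMonomials α β R (p, q) =
      (p.map fun i => X (Sum.inl i)).prod * (q.map fun j => X (Sum.inr j)).prod := by
  classical
  have hmonomial : basisSumMonomials α β R (p, q) =
      monomial (p.toFinsupp.sumElim q.toFinsupp) 1 := by
    simp [basisSumMonomials]
  rw [hmonomial, monomial_eq, C_1, one_mul, Finsupp.prod_sumElim]
  simp only [Finsupp.prod, Multiset.toFinsupp_support, Multiset.toFinsupp_apply,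
    Function.comp_apply, Finset.prod_multiset_map_count]

section FiberMinors

variable {V C : Type*} (R : Type*) [CommRing R]

/-- The sum of the binomial edge ideals of the complete graphs on the fibers of `c`. The fibers play
the role of the connected components of a graph. -/
def fiberMinorIdeal (c : V → C) : Ideal (MvPolynomial (V ⊕ V) R) :=
  Ideal.span { f | ∃ i j, i ≠ j ∧ c i = c j ∧
    f = X (Sum.inl i) * X (Sum.inr j) - X (Sum.inl j) * X (Sum.inr i) }

/-- The parametrization `x_i ↦ t_i a_{c i}`, `y_i ↦ t_i` whose kernel is `fiberMinorIdeal R c`,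
where `t_i = X (Sum.inl i)` and `a_k = X (Sum.inr k)`. It is the Segre parametrization
`x_i ↦ t_i a_{c i}`, `y_i ↦ t_i b_{c i}` at `b = 1`, which loses nothing because the exponents of
the `b_k` are determined by those of the `t_i` and the `a_k`. -/
def fiberMinorHom (c : V → C) : MvPolynomial (V ⊕ V) R →ₐ[R] MvPolynomial (V ⊕ C) R :=
  aeval (Sum.elim (fun i => X (Sum.inl i) * X (Sum.inr (c i))) fun i => X (Sum.inl i))

variable {R}

lemma minor_mem_fiberMinorIdeal {c : V → C} {i j : V} (h : c i = c j) :
    X (Sum.inl i) * X (Sum.inr j) - X (Sum.inl j) * X (Sum.inr i) ∈ fiberMinorIdeal R c := by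
  by_cases hij : i = j
  · simp [hij]
  · exact Ideal.subset_span ⟨i, j, hij, h, rfl⟩

lemma fiberMinorHom_basisSumMonomials (c : V → C) (p q : Multiset V) :
    fiberMinorHom R c (basisSumMonomials V V R (p, q)) =
      basisSumMonomials V C R (p + q, p.map c) := by
  simp only [basisSumMonomials_apply, fiberMinorHom, map_mul, map_multiset_prod, Multiset.map_map,
    Function.comp_def, aeval_X, Sum.elim_inl, Sum.elim_inr, Multiset.map_add, Multiset.prod_add,
    Multiset.prod_map_mul]
  exact mul_right_comm _ _ _

lemma basisSumMonomials_sub_mem_fiberMinorIdeal {c : V → C} {p q p' q' : Multiset V}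
    (hadd : p + q = p' + q') (hc : p.map c = p'.map c) :
    basisSumMonomials V V R (p, q) - basisSumMonomials V V R (p', q') ∈ fiberMinorIdeal R c := by
  rw [← Ideal.Quotient.eq]
  have := prod_map_mul_prod_map_eq_of_swap (c := c)
    (x := fun i => Ideal.Quotient.mk (fiberMinorIdeal R c) (X (Sum.inl i)))
    (y := fun i => Ideal.Quotient.mk (fiberMinorIdeal R c) (X (Sum.inr i)))
    (fun i j h => by
      simpa only [map_mul] using Ideal.Quotient.eq.mpr (minor_mem_fiberMinorIdeal h)) hadd hc
  simpa [basisSumMonomials_apply, map_multiset_prod] using this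

lemma ker_fiberMinorHom (c : V → C) :
    RingHom.ker (fiberMinorHom R c) = fiberMinorIdeal R c := by
  apply le_antisymm
  · exact ker_le_of_basis_sub_mem (basisSumMonomials V V R) (basisSumMonomials V C R)
      (φ := (fiberMinorHom R c).toLinearMap) (e := fun m => (m.1 + m.2, m.1.map c))
      (N := (fiberMinorIdeal R c).restrictScalars R)
      (fun m => fiberMinorHom_basisSumMonomials c m.1 m.2) fun m m' h =>
        basisSumMonomials_sub_mem_fiberMinorIdeal (Prod.ext_iff.mp h).1 (Prod.ext_iff.mp h).2
  · refine Ideal.span_le.mpr ?_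
    rintro _ ⟨i, j, -, hc, rfl⟩
    simp only [fiberMinorHom, SetLike.mem_coe, RingHom.mem_ker, map_sub, map_mul, aeval_X,
      Sum.elim_inl, Sum.elim_inr, hc]
    ring

lemma fiberMinorIdeal_isPrime [IsDomain R] (c : V → C) : (fiberMinorIdeal R c).IsPrime :=
  ker_fiberMinorHom (R := R) c ▸ RingHom.ker_isPrime _

lemma map_rename_fiberMinorIdeal {W : Type*} (c : V → C) (f : V → W) :
    (fiberMinorIdeal R c).map (rename (Sum.map f f)) =
      Ideal.span { g | ∃ i j, i ≠ j ∧ c i = c j ∧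
        g = X (Sum.inl (f i)) * X (Sum.inr (f j)) - X (Sum.inl (f j)) * X (Sum.inr (f i)) } := by
  rw [fiberMinorIdeal, Ideal.map_span]
  congr 1
  ext g
  constructor
  · rintro ⟨_, ⟨i, j, hij, hc, rfl⟩, rfl⟩
    exact ⟨i, j, hij, hc, by simp⟩
  · rintro ⟨i, j, hij, hc, rfl⟩
    exact ⟨_, ⟨i, j, hij, hc, rfl⟩, by simp⟩

end FiberMinors

theorem PTIdeal_isPrime_general (R : Type*) [CommRing R] [IsDomain R] {V : Type*}
    (G : SimpleGraph V) (T : Set V) :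
    (Ideal.span ({ f : MvPolynomial (V ⊕ V) R | ∃ i ∈ T, f = X (Sum.inl i) } ∪
      { f | ∃ i ∈ T, f = X (Sum.inr i) } ∪
      { f | ∃ (i j : V) (hi : i ∈ Tᶜ) (hj : j ∈ Tᶜ), i ≠ j ∧
        (G.induce Tᶜ).Reachable ⟨i, hi⟩ ⟨j, hj⟩ ∧
        f = X (Sum.inl i) * X (Sum.inr j) - X (Sum.inl j) * X (Sum.inr i) })).IsPrime := by
  have hval : (Sum.map Subtype.val Subtype.val : ↥Tᶜ ⊕ ↥Tᶜ → V ⊕ V).Injective :=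
    Subtype.val_injective.sumMap Subtype.val_injective
  have hprime := fiberMinorIdeal_isPrime (R := R) (G.induce Tᶜ).connectedComponentMk
  convert hprime.comap (killCompl hval) using 1
  rw [comap_killCompl, map_rename_fiberMinorIdeal, sup_comm, ← Ideal.span_union,
    compl_range_sumMap, Subtype.range_val, compl_compl, Set.image_union, Set.image_image,
    Set.image_image]
  congr 2
  · ext f
    simp only [Set.mem_union, Set.mem_ofPred_eq, Set.mem_image, eq_comm]
  · ext f
    constructor
    · rintro ⟨i, j, hi, hj, hij, hreach, rfl⟩
      exact ⟨⟨i, hi⟩, ⟨j, hj⟩, Subtype.coe_ne_coe.mp hij,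
        SimpleGraph.ConnectedComponent.eq.mpr hreach, rfl⟩
    · rintro ⟨i, j, hij, hc, rfl⟩
      exact ⟨i, j, i.2, j.2, Subtype.coe_ne_coe.mpr hij,
        SimpleGraph.ConnectedComponent.eq.mp hc, rfl⟩

/-- For every `T ⊆ [n]`, the ideal `P_T(G)` is a prime ideal of `S`. -/
theorem PTIdeal_isPrime (K : Type*) [Field K] (n : ℕ) (G : SimpleGraph (Fin n))
    (T : Set (Fin n)) : (PTIdeal K G T).IsPrime :=
  PTIdeal_isPrime_general K G T

end
end

section
/- The binomial edge ideal decomposes as J_G = ⋂_{T ⊆ [n]} P_T(G). -/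
open MvPolynomial

noncomputable section

/-!
Grade `S` by `V →₀ ℕ`, giving `x_i` and `y_i` degree `e_i`. All the ideals involved are generated
by homogeneous elements, so it suffices to show that, in each degree `a`, the ideal `P_T(G)` with
`T = {k | a k = 0}` is contained in `J_G`. The variables indexed by `T` contribute nothing in
degree `a`, so what is left are the products `m f_{ij}`, with `m` a monomial and `i`, `j` joined by
a walk outside `T`. If the first step of that walk goes from `i` to `k ≠ j`, then `a k ≠ 0` forces
`x_k` or `y_k` to divide `m`, and the Plücker relation `x_k f_{ij} = x_i f_{kj} + x_j f_{ik}` (or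
its analogue for `y`) trades `m f_{ij}` for an element of the same form and degree whose walk is
shorter, modulo `f_{ik} ∈ J_G`.
-/

section WeightedHomogeneous

variable {R M σ : Type*} [CommSemiring R] [AddCommMonoid M] {w : σ → M}

theorem weightedHomogeneousComponent_mem_of_mem_span {S : Set (MvPolynomial σ R)}
    {J : Ideal (MvPolynomial σ R)} {a : M}
    (hS : ∀ g ∈ S, ∃ d, IsWeightedHomogeneous w g d ∧
      ∀ m : σ →₀ ℕ, Finsupp.weight w m + d = a → monomial m 1 * g ∈ J)
    {f : MvPolynomial σ R} (hf : f ∈ Ideal.span S) :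
    weightedHomogeneousComponent w a f ∈ J := by
  suffices h : (Ideal.span S).restrictScalars R ≤
      (J.restrictScalars R).comap (weightedHomogeneousComponent w a) from h hf
  rw [Ideal.span, ← Submodule.span_smul_of_span_eq_top (basisMonomials σ R).span_eq,
    Submodule.span_le]
  rintro _ ⟨_, ⟨m, rfl⟩, g, hg, rfl⟩
  obtain ⟨d, hd, hJ⟩ := hS g hg
  have hmg : IsWeightedHomogeneous w (monomial m (1 : R) * g) (Finsupp.weight w m + d) :=
    (isWeightedHomogeneous_monomial w m 1 rfl).mul hd
  suffices weightedHomogeneousComponent w a (monomial m 1 * g) ∈ J by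
    simpa [coe_basisMonomials] using this
  by_cases ha : Finsupp.weight w m + d = a
  · rw [← ha, hmg.weightedHomogeneousComponent_same]
    exact hJ m ha
  · rw [hmg.weightedHomogeneousComponent_ne _ (Ne.symm ha)]
    exact J.zero_mem

theorem mem_of_forall_weightedHomogeneousComponent_mem {J : Ideal (MvPolynomial σ R)}
    {f : MvPolynomial σ R} (hf : ∀ a, weightedHomogeneousComponent w a f ∈ J) : f ∈ J := by
  rw [← finsum_weightedHomogeneousComponent w f]
  exact finsum_induction (· ∈ J) J.zero_mem (fun _ _ => J.add_mem) hf

end WeightedHomogeneous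

section VertexGrading

variable {V : Type*}

/-- The vertex `i` to which a variable `x_i` or `y_i` belongs. -/
def vertex : V ⊕ V → V :=
  Sum.elim id id

/-- The variable of the same kind (`x` or `y`) as the given one that belongs to the vertex `i`. -/
def relabel (i : V) : V ⊕ V → V ⊕ V :=
  Sum.map (fun _ => i) (fun _ => i)

/-- The degrees of the variables in the fine grading of `S` by vertices: `x_i` and `y_i` both have
degree `e_i`. -/
def vertexDegree (v : V ⊕ V) : V →₀ ℕ :=
  Finsupp.single (vertex v) 1

theorem vertex_relabel (i : V) (v : V ⊕ V) : vertex (relabel i v) = i := by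
  cases v <;> rfl

theorem exists_vertex_eq_of_weight_ne_zero {m : V ⊕ V →₀ ℕ} {k : V}
    (hk : Finsupp.weight vertexDegree m k ≠ 0) : ∃ v, m v ≠ 0 ∧ vertex v = k := by
  classical
  have hmap : Finsupp.weight vertexDegree m = m.mapDomain vertex := by
    simp [Finsupp.weight_apply, Finsupp.mapDomain, vertexDegree]
  rw [hmap, ← Finsupp.mem_support_iff] at hk
  simpa using Finsupp.mapDomain_support hk

end VertexGrading

section Minor

variable (R : Type*) [CommRing R] {V : Type*}

/-- The `2`-minor `f_{ij} = x_i y_j - x_j y_i`, for `i` and `j` in either order or equal. -/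
def minor (i j : V) : MvPolynomial (V ⊕ V) R :=
  X (Sum.inl i) * X (Sum.inr j) - X (Sum.inl j) * X (Sum.inr i)

@[simp]
theorem minor_self (i : V) : minor R i i = 0 :=
  sub_self _

theorem X_mul_minor (v : V ⊕ V) (i j : V) :
    X v * minor R i j =
      X (relabel i v) * minor R (vertex v) j + X (relabel j v) * minor R i (vertex v) := by
  cases v <;> simp only [minor, relabel, vertex, Sum.map_inl, Sum.map_inr, Sum.elim_inl,
    Sum.elim_inr, id_eq] <;> ring

theorem isWeightedHomogeneous_minor (i j : V) :
    IsWeightedHomogeneous vertexDegree (minor R i j)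
      (Finsupp.single i 1 + Finsupp.single j 1) := by
  have hX (v : V ⊕ V) := isWeightedHomogeneous_X R vertexDegree v
  refine ((hX (.inl i)).mul (hX (.inr j))).sub ?_
  rw [add_comm]
  exact (hX (.inl j)).mul (hX (.inr i))

variable {R}

theorem minor_mem_of_X_mem_left {I : Ideal (MvPolynomial (V ⊕ V) R)} {i : V}
    (hi : ∀ v, vertex v = i → X v ∈ I) (j : V) : minor R i j ∈ I :=
  I.sub_mem (I.mul_mem_right _ (hi (.inl i) rfl)) (I.mul_mem_left _ (hi (.inr i) rfl))

theorem minor_mem_of_X_mem_right {I : Ideal (MvPolynomial (V ⊕ V) R)} (i : V) {j : V}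
    (hj : ∀ v, vertex v = j → X v ∈ I) : minor R i j ∈ I :=
  I.sub_mem (I.mul_mem_left _ (hj (.inr j) rfl)) (I.mul_mem_right _ (hj (.inl j) rfl))

end Minor

section Decomposition

variable (R : Type*) [CommRing R] {V : Type*} (G : SimpleGraph V)

/-- The binomial edge ideal `J_G`, over any commutative ring of coefficients. -/
def edgeMinorIdeal : Ideal (MvPolynomial (V ⊕ V) R) :=
  Ideal.span {f | ∃ i j, G.Adj i j ∧ f = minor R i j}

/-- The ideal `P_T(G)`, over any commutative ring of coefficients and on any vertex type. The
generators include the zero minors `f_{ii}`. -/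
def componentMinorIdeal (T : Set V) : Ideal (MvPolynomial (V ⊕ V) R) :=
  Ideal.span (X '' (vertex ⁻¹' T) ∪
    {f | ∃ i j : ↥Tᶜ, (G.induce Tᶜ).Reachable i j ∧ f = minor R (i : V) j})

variable {R G}

theorem minor_mem_edgeMinorIdeal {i j : V} (h : G.Adj i j) : minor R i j ∈ edgeMinorIdeal R G :=
  Ideal.subset_span ⟨i, j, h, rfl⟩

theorem X_mem_componentMinorIdeal {T : Set V} {v : V ⊕ V} (hv : vertex v ∈ T) :
    X v ∈ componentMinorIdeal R G T :=
  Ideal.subset_span (.inl ⟨v, hv, rfl⟩)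

theorem minor_mem_componentMinorIdeal {T : Set V} {i j : V} {hi : i ∈ Tᶜ} {hj : j ∈ Tᶜ}
    (h : (G.induce Tᶜ).Reachable ⟨i, hi⟩ ⟨j, hj⟩) : minor R i j ∈ componentMinorIdeal R G T :=
  Ideal.subset_span (.inr ⟨⟨i, hi⟩, ⟨j, hj⟩, h, rfl⟩)

variable (R G) in
theorem edgeMinorIdeal_le_componentMinorIdeal (T : Set V) :
    edgeMinorIdeal R G ≤ componentMinorIdeal R G T := by
  refine Ideal.span_le.2 ?_
  rintro _ ⟨i, j, hij, rfl⟩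
  by_cases hi : i ∈ T
  · exact minor_mem_of_X_mem_left (fun v hv => X_mem_componentMinorIdeal (hv ▸ hi)) j
  by_cases hj : j ∈ T
  · exact minor_mem_of_X_mem_right i fun v hv => X_mem_componentMinorIdeal (hv ▸ hj)
  have hadj : (G.induce Tᶜ).Adj ⟨i, hi⟩ ⟨j, hj⟩ := hij
  exact minor_mem_componentMinorIdeal hadj.reachable

theorem monomial_mul_minor_mem_edgeMinorIdeal {a : V →₀ ℕ} {i j : ↥{k | a k = 0}ᶜ}
    (hij : (G.induce {k | a k = 0}ᶜ).Reachable i j) {m : V ⊕ V →₀ ℕ}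
    (hm : Finsupp.weight vertexDegree m + (Finsupp.single (i : V) 1 + Finsupp.single (j : V) 1) =
      a) :
    monomial m 1 * minor R (i : V) j ∈ edgeMinorIdeal R G := by
  obtain ⟨p⟩ := hij
  induction p generalizing m with
  | nil => simp
  | @cons i k j hik _ ih =>
    have hadj : G.Adj (i : V) k := hik
    by_cases hkj : k = j
    · exact Ideal.mul_mem_left _ _ (minor_mem_edgeMinorIdeal (hkj ▸ hadj))
    have hmk : Finsupp.weight vertexDegree m (k : V) ≠ 0 := by
      have hjk : (j : V) ≠ k := fun h => hkj (Subtype.ext h.symm)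
      have hk : a k ≠ 0 := k.2
      simpa [← hm, hadj.ne, hjk] using hk
    obtain ⟨v, hv, hvk⟩ := exists_vertex_eq_of_weight_ne_zero hmk
    obtain ⟨m, rfl⟩ : ∃ m', m = m' + Finsupp.single v 1 :=
      ⟨m - Finsupp.single v 1, (Finsupp.sub_add_single_one_cancel hv).symm⟩
    have exchange : monomial (m + Finsupp.single v 1) (1 : R) * minor R (i : V) j =
        monomial (m + Finsupp.single (relabel (i : V) v) 1) 1 * minor R (k : V) j +
          monomial m 1 * X (relabel (j : V) v) * minor R (i : V) k := by
      simp only [monomial_add_single, pow_one, mul_assoc, X_mul_minor R v, hvk, mul_add]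
    rw [exchange]
    refine Ideal.add_mem _ (ih ?_) (Ideal.mul_mem_left _ _ (minor_mem_edgeMinorIdeal hadj))
    refine Eq.trans ?_ hm
    simp only [map_add, Finsupp.weight_single, vertexDegree, vertex_relabel, hvk, one_smul]
    abel

theorem weightedHomogeneousComponent_mem_edgeMinorIdeal {a : V →₀ ℕ}
    {f : MvPolynomial (V ⊕ V) R} (hf : f ∈ componentMinorIdeal R G {k | a k = 0}) :
    weightedHomogeneousComponent vertexDegree a f ∈ edgeMinorIdeal R G := by
  refine weightedHomogeneousComponent_mem_of_mem_span ?_ hf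
  rintro _ (⟨v, hv, rfl⟩ | ⟨i, j, hij, rfl⟩)
  · refine ⟨vertexDegree v, isWeightedHomogeneous_X R vertexDegree v, fun m hm => ?_⟩
    have hav : a (vertex v) = 0 := hv
    simp [← hm, vertexDegree] at hav
  · exact ⟨_, isWeightedHomogeneous_minor R (i : V) j,
      fun m hm => monomial_mul_minor_mem_edgeMinorIdeal hij hm⟩

variable (R G) in
theorem binomialEdgeIdeal_eq_iInf_PTIdeal_general :
    edgeMinorIdeal R G = ⨅ T : Set V, componentMinorIdeal R G T := by
  refine le_antisymm (le_iInf fun T => edgeMinorIdeal_le_componentMinorIdeal R G T) fun f hf => ?_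
  exact mem_of_forall_weightedHomogeneousComponent_mem fun a =>
    weightedHomogeneousComponent_mem_edgeMinorIdeal (Ideal.mem_iInf.1 hf {k | a k = 0})

end Decomposition

theorem PTIdeal_eq_componentMinorIdeal (K : Type*) [Field K] {n : ℕ} (G : SimpleGraph (Fin n))
    (T : Set (Fin n)) : PTIdeal K G T = componentMinorIdeal K G T := by
  apply le_antisymm <;> refine Ideal.span_le.2 ?_
  · rintro _ ((⟨i, hi, rfl⟩ | ⟨i, hi, rfl⟩) | ⟨i, j, hi, hj, -, hij, rfl⟩)
    · exact X_mem_componentMinorIdeal hi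
    · exact X_mem_componentMinorIdeal hi
    · exact minor_mem_componentMinorIdeal hij
  · rintro _ (⟨i | i, hi, rfl⟩ | ⟨i, j, hij, rfl⟩)
    · exact Ideal.subset_span (.inl (.inl ⟨i, hi, rfl⟩))
    · exact Ideal.subset_span (.inl (.inr ⟨i, hi, rfl⟩))
    · by_cases h : i = j
      · simp [h]
      · exact Ideal.subset_span
          (.inr ⟨i, j, i.2, j.2, fun h' => h (Subtype.ext h'), hij, rfl⟩)

/-- The binomial edge ideal decomposes as `J_G = ⋂_{T ⊆ [n]} P_T(G)`. -/
theorem binomialEdgeIdeal_eq_iInf_PTIdeal (K : Type*) [Field K] (n : ℕ)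
    (G : SimpleGraph (Fin n)) :
    binomialEdgeIdeal K G = ⨅ T : Set (Fin n), PTIdeal K G T := by
  simp only [PTIdeal_eq_componentMinorIdeal]
  exact binomialEdgeIdeal_eq_iInf_PTIdeal_general K G

end
end
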